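/- arXiv:1108.4031 — 2 statements merged into one kernel-verified Lean document; each statement's English description precedes it below -/
import Mathlib

section
/- Let $p\equiv 1\pmod 4$ be prime, $n=(p-1)/2$, $\zeta=e^{2\pi i/p}$, $\varepsilon>1$ the fundamental unit of $\mathbb{Q}(\sqrt p)$ and $h$ the class number. Then $\prod_{j=1}^{n}\big(1+(\tfrac{j}{p})\zeta^{j}\big)^2 = \zeta^{n(n+1)/2}\,\varepsilon^{(2-(2/p))h}\,\prod_{j=1}^{n}(\zeta^{j/2}-\zeta^{-j/2})$. -/
/-!
A number `z` on the unit circle satisfies `(1 + z)² = z |1 + z|²`, so the product splits into a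
phase and a modulus. The signs `(j/p)`, `1 ≤ j ≤ (p - 1) / 2`, sum to zero, hence multiply to
`i ^ ((p - 1) / 2)`, the phase of `∏ (ζ^(j/2) - ζ^(-j/2)) = ∏ 2i sin (πj/p)`. For the modulus,
`|1 + ζ^j| = |1 - ζ^(2j)| / |1 - ζ^j|` reduces everything to the sum of
`(x/p) log |1 - ζ^x|` over `ZMod p`, and the substitution `x ↦ 2x` produces the factor `2 - (2/p)`.

That sum is `-2 h log ε` by Dirichlet's class number formula. It follows by computing `L(1, χ)` for
the Legendre character `χ` in two ways. Expanding `χ` in additive characters gives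
`-(∑ χ(x) log (1 - ζ^x)) / √p`, where the sign of the Gauss sum is found by comparing it with
Gauss's product modulo a power of `1 - ζ`. On the other hand, counting ideals of prime power norm
shows `ζ_K = ζ · L(·, χ)`, so `L(1, χ)` is the residue of `ζ_K` at `1`.
-/

open Finset Polynomial NumberField ComplexConjugate
open scoped Real

/-! ### Gauss's product -/

lemma prod_range_two_mul {M : Type*} [CommMonoid M] (f : ℕ → M) (n : ℕ) :
    ∏ j ∈ range (2 * n), f j = ∏ k ∈ range n, (f (2 * k) * f (2 * k + 1)) := by
  induction n with
  | zero => simp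
  | succ n ih =>
    rw [show 2 * (n + 1) = 2 * n + 1 + 1 by ring, prod_range_succ, prod_range_succ,
      prod_range_succ, ih, mul_assoc]

/-- Gauss's product `∏ (x ^ a - x ^ (n - a))` over the odd numbers `a < n`, for odd `n`. At a
primitive `n`-th root of unity it is an explicit square root of `± n`, and for prime `n` it is
equal to the quadratic Gauss sum. -/
def gaussProd {R : Type*} [CommRing R] (n : ℕ) (x : R) : R :=
  ∏ k ∈ range ((n - 1) / 2), (x ^ (2 * k + 1) - x ^ (n - (2 * k + 1)))

lemma map_gaussProd {R S : Type*} [CommRing R] [CommRing S] (f : R →+* S) (n : ℕ) (x : R) :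
    f (gaussProd n x) = gaussProd n (f x) := by
  simp only [gaussProd, map_prod, map_sub, map_pow]

lemma gaussProd_sq {R : Type*} [CommRing R] [IsDomain R] {ζ : R} {n : ℕ} (hn : Odd n)
    (hζ : IsPrimitiveRoot ζ n) : gaussProd n ζ ^ 2 = (-1) ^ ((n - 1) / 2) * n := by
  obtain ⟨m, rfl⟩ := hn
  have hζ2 : IsPrimitiveRoot (ζ ^ 2) (2 * m + 1) := hζ.pow_of_coprime 2 (by simp)
  have pair (k : ℕ) (hk : k ∈ range m) :
      (1 - (ζ ^ 2) ^ (2 * k + 1)) * (1 - (ζ ^ 2) ^ (2 * (m - 1 - k) + 1 + 1)) =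
        -1 * (ζ ^ (2 * k + 1) - ζ ^ (2 * m + 1 - (2 * k + 1))) ^ 2 := by
    rw [mem_range] at hk
    have hinv : ζ ^ (2 * k + 1) * ζ ^ (2 * m + 1 - (2 * k + 1)) = 1 := by
      rw [← pow_add, Nat.add_sub_cancel' (by omega), hζ.pow_eq_one]
    rw [show 2 * (m - 1 - k) + 1 + 1 = 2 * m + 1 - (2 * k + 1) by omega,
      pow_right_comm ζ 2, pow_right_comm ζ 2]
    linear_combination (ζ ^ (2 * k + 1) * ζ ^ (2 * m + 1 - (2 * k + 1)) - 1) * hinv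
  have hprod := hζ2.prod_one_sub_pow_eq_order
  rw [prod_range_two_mul (fun k => 1 - (ζ ^ 2) ^ (k + 1)), prod_mul_distrib,
    ← prod_range_reflect (fun k => 1 - (ζ ^ 2) ^ (2 * k + 1 + 1)), ← prod_mul_distrib,
    prod_congr rfl pair, prod_mul_distrib, prod_const, card_range, prod_pow] at hprod
  rw [gaussProd, show (2 * m + 1 - 1) / 2 = m by omega, Nat.cast_add_one, ← hprod,
    ← mul_assoc, ← mul_pow, neg_one_mul, neg_neg, one_pow, one_mul]

lemma exp_pow_sub_exp_pow_sub {n a : ℕ} (ha : a ≤ n) (hn : n ≠ 0) :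
    Complex.exp (2 * π * Complex.I / n) ^ a - Complex.exp (2 * π * Complex.I / n) ^ (n - a) =
      2 * Complex.I * (Real.sin (2 * π * a / n) : ℂ) := by
  have hn' : (n : ℂ) ≠ 0 := Nat.cast_ne_zero.mpr hn
  have hpow : Complex.exp (2 * π * Complex.I / n) ^ (n - a) =
      Complex.exp (-(2 * π * a / n * Complex.I)) := by
    rw [← Complex.exp_nat_mul, Nat.cast_sub ha, ← mul_one (Complex.exp (-_)),
      ← Complex.exp_two_pi_mul_I, ← Complex.exp_add]
    congr 1
    field_simp
    ring
  have htwo := Complex.two_sin (2 * π * a / n)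
  rw [hpow, ← Complex.exp_nat_mul, show (a : ℂ) * (2 * π * Complex.I / n) =
    2 * π * a / n * Complex.I by ring]
  push_cast
  rw [neg_mul] at htwo
  linear_combination -Complex.I * htwo - (Complex.exp (-(2 * π * a / n * Complex.I)) -
    Complex.exp (2 * π * a / n * Complex.I)) * Complex.I_sq

lemma gaussProd_exp_eq_sqrt {n : ℕ} (hn : n % 4 = 1) :
    gaussProd n (Complex.exp (2 * π * Complex.I / n)) = (√n : ℂ) := by
  have hn0 : n ≠ 0 := by omega
  suffices h : ∃ r : ℝ, 0 < r ∧ gaussProd n (Complex.exp (2 * π * Complex.I / n)) = r by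
    obtain ⟨r, hr, h⟩ := h
    have hsq := gaussProd_sq (Nat.odd_iff.mpr (by omega)) (Complex.isPrimitiveRoot_exp n hn0)
    rw [h, Even.neg_one_pow (Nat.even_iff.mpr (by omega)), one_mul] at hsq
    rw [h, ← Real.sqrt_sq hr.le, (mod_cast hsq : r ^ 2 = n)]
  obtain ⟨m, hm⟩ : ∃ m, n = 4 * m + 1 := ⟨n / 4, by omega⟩
  have sin_pos (a : ℕ) (ha : 0 < a) (han : 2 * a < n) : 0 < Real.sin (2 * π * a / n) := by
    have han' : (2 * a : ℝ) < n := mod_cast han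
    refine Real.sin_pos_of_pos_of_lt_pi (by positivity) ?_
    rw [div_lt_iff₀ (by positivity)]
    nlinarith [Real.pi_pos]
  -- The factor of `a` is paired with that of `n - 1 - a`, where the sine has the opposite sign.
  refine ⟨∏ k ∈ range m, 4 * Real.sin (2 * π * (2 * k + 1 : ℕ) / n) *
    Real.sin (2 * π * (2 * k + 2 : ℕ) / n), prod_pos fun k hk => ?_, ?_⟩
  · rw [mem_range] at hk
    have := sin_pos (2 * k + 1) (by omega) (by omega)
    have := sin_pos (2 * k + 2) (by omega) (by omega)
    positivity
  rw [gaussProd, show (n - 1) / 2 = m + m by omega, prod_range_add,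
    ← prod_range_reflect (fun k => _ ^ (2 * (m + k) + 1) - _ ^ (n - (2 * (m + k) + 1))),
    ← prod_mul_distrib, Complex.ofReal_prod]
  refine prod_congr rfl fun k hk => ?_
  rw [mem_range] at hk
  rw [show 2 * (m + (m - 1 - k)) + 1 = n - (2 * k + 2) by omega,
    show n - (n - (2 * k + 2)) = 2 * k + 2 by omega, ← neg_sub (_ ^ (2 * k + 2)),
    exp_pow_sub_exp_pow_sub (by omega) hn0, exp_pow_sub_exp_pow_sub (by omega) hn0]
  rw [Complex.ofReal_mul, Complex.ofReal_mul, Complex.ofReal_ofNat]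
  linear_combination (-4 * (Real.sin (2 * π * (2 * k + 1 : ℕ) / n) : ℂ) *
    Real.sin (2 * π * (2 * k + 2 : ℕ) / n)) * Complex.I_sq

/-! ### The sign of the quadratic Gauss sum -/

lemma sum_eval_eq_neg_coeff_of_natDegree_lt {F : Type*} [Field F] [Fintype F] {f : F[X]}
    (hf : f.natDegree < Fintype.card F) :
    ∑ x, f.eval x = -f.coeff (Fintype.card F - 1) := by
  classical
  have hcard : Fintype.card F - 1 + 1 = Fintype.card F := Nat.sub_add_cancel Fintype.card_pos
  have sum_pow_card_sub_one : ∑ x : F, x ^ (Fintype.card F - 1) = -1 := by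
    have h0 : (0 : F) ^ (Fintype.card F - 1) = 0 :=
      zero_pow (Nat.sub_pos_of_lt Fintype.one_lt_card).ne'
    rw [← add_sum_erase _ _ (mem_univ 0), h0, zero_add,
      sum_congr rfl fun x hx => FiniteField.pow_card_sub_one_eq_one x (ne_of_mem_erase hx)]
    simp [card_erase_of_mem, Nat.cast_sub Fintype.card_pos]
  simp only [eval_eq_sum_range' (hcard ▸ hf)]
  rw [sum_comm]
  simp only [← mul_sum]
  rw [sum_range_succ, sum_pow_card_sub_one, sum_eq_zero fun i hi => ?_, zero_add, mul_neg_one]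
  rw [FiniteField.sum_pow_lt_card_sub_one _ _ (mem_range.mp hi), mul_zero]

lemma factorial_mul_prod_range_two_mul_odd (m : ℕ) :
    m.factorial * ∏ k ∈ range m, (2 * (2 * k + 1)) = (2 * m).factorial := by
  induction m with
  | zero => simp
  | succ m ih =>
    rw [prod_range_succ, show 2 * (m + 1) = 2 * m + 1 + 1 by ring, Nat.factorial_succ,
      Nat.factorial_succ, Nat.factorial_succ, ← ih]
    ring

lemma X_sub_one_pow_dvd_map_of_aeval_eq_zero {p : ℕ} [hp : Fact p.Prime] {R : Type*} [Field R]
    [CharZero R] {ζ : R} (hζ : IsPrimitiveRoot ζ p) {F : ℤ[X]} (hF : aeval ζ F = 0) :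
    (X - C 1) ^ (p - 1) ∣ F.map (Int.castRingHom (ZMod p)) := by
  have hdvd : cyclotomic p ℤ ∣ F := by
    rw [cyclotomic_eq_minpoly hζ hp.out.pos]
    exact minpoly.isIntegrallyClosed_dvd (hζ.isIntegral hp.out.pos) hF
  have hcyc := cyclotomic_mul_prime_eq_pow_of_not_dvd (ZMod p) hp.out.not_dvd_one
  rw [one_mul, cyclotomic_one] at hcyc
  rw [C_1, ← hcyc, ← map_cyclotomic p (Int.castRingHom (ZMod p))]
  exact Polynomial.map_dvd _ hdvd

/-- The Legendre symbol `(· / p)` as a Dirichlet character modulo `p` with values in `R`. -/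
def legendreChar (p : ℕ) [Fact p.Prime] (R : Type*) [CommRing R] : DirichletCharacter R p :=
  (quadraticChar (ZMod p)).ringHomComp (Int.castRingHom R)

section LegendreChar

variable {p : ℕ} [Fact p.Prime]

lemma legendreChar_intCast (R : Type*) [CommRing R] (a : ℤ) :
    legendreChar p R a = legendreSym p a := by
  simp [legendreChar, legendreSym]

lemma isQuadratic_legendreChar (R : Type*) [CommRing R] : (legendreChar p R).IsQuadratic :=
  (quadraticChar_isQuadratic _).comp _

lemma legendreChar_ne_one (hp : p ≠ 2) (R : Type*) [CommRing R] [CharZero R] :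
    legendreChar p R ≠ 1 :=
  (MulChar.ringHomComp_ne_one_iff Int.cast_injective).mpr
    (quadraticChar_ne_one (by rwa [ZMod.ringChar_zmod_n]))

lemma legendreChar_neg_one (hp : p ≠ 2) (R : Type*) [CommRing R] :
    legendreChar p R (-1) = (-1) ^ (p / 2) := by
  have hodd : p % 2 = 1 := Nat.odd_iff.mp ((Fact.out : p.Prime).odd_of_ne_two hp)
  have h := legendreChar_intCast (p := p) R (-1)
  rw [legendreSym.at_neg_one hp, ZMod.χ₄_eq_neg_one_pow hodd] at h
  simpa using h

end LegendreChar

/-- The Fekete polynomial `∑ (j/p) X ^ j` over `0 ≤ j < p`, whose value at a primitive `p`-th root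
of unity is a quadratic Gauss sum. -/
noncomputable def feketePoly (p : ℕ) [Fact p.Prime] : ℤ[X] :=
  ∑ x : ZMod p, C (quadraticChar (ZMod p) x) * X ^ x.val

lemma aeval_feketePoly {p : ℕ} [Fact p.Prime] {R : Type*} [CommRing R]
    (ψ : AddChar (ZMod p) R) :
    aeval (ψ 1) (feketePoly p) =
      gaussSum (legendreChar p R) ψ := by
  simp [feketePoly, gaussSum, legendreChar, ← AddChar.map_nsmul_eq_pow]

lemma eval_iterate_derivative_feketePoly {p : ℕ} [Fact p.Prime] (hp : p ≠ 2) :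
    (derivative^[(p - 1) / 2] ((feketePoly p).map (Int.castRingHom (ZMod p)))).eval 1 = -1 := by
  obtain ⟨m, hm⟩ := (Fact.out : p.Prime).odd_of_ne_two hp
  have hterm (x : ZMod p) : (derivative^[m] (((C (quadraticChar (ZMod p) x) * X ^ x.val).map
      (Int.castRingHom (ZMod p))))).eval 1 = (X ^ m * descPochhammer (ZMod p) m).eval x := by
    have hdesc : ((x.val.descFactorial m : ℕ) : ZMod p) = (descPochhammer (ZMod p) m).eval x := by
      rw [← descPochhammer_eval_eq_descFactorial, ZMod.natCast_zmod_val]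
    have hchar : (quadraticChar (ZMod p) x : ZMod p) = x ^ m := by
      rw [quadraticChar_eq_pow_of_char_ne_two' (by rwa [ZMod.ringChar_zmod_n]), ZMod.card,
        show p / 2 = m by omega]
    rw [Polynomial.map_mul, map_C, eq_intCast (Int.castRingHom _), hchar, Polynomial.map_pow,
      map_X, iterate_derivative_C_mul, iterate_derivative_X_pow_eq_smul]
    simp [hdesc, mul_comm]
  have hmonic : (X ^ m * descPochhammer (ZMod p) m).Monic :=
    (monic_X_pow m).mul (monic_descPochhammer (ZMod p) m)
  have hdeg : (X ^ m * descPochhammer (ZMod p) m).natDegree = p - 1 := by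
    rw [(monic_X_pow m).natDegree_mul (monic_descPochhammer (ZMod p) m), natDegree_X_pow,
      descPochhammer_natDegree]
    omega
  rw [show (p - 1) / 2 = m by omega, feketePoly, Polynomial.map_sum, iterate_derivative_sum,
    eval_finsetSum, sum_congr rfl fun x _ => hterm x,
    sum_eval_eq_neg_coeff_of_natDegree_lt (by rw [hdeg, ZMod.card]; omega), ZMod.card, ← hdeg,
    coeff_natDegree, hmonic.leadingCoeff]

lemma eval_iterate_derivative_gaussProd {p : ℕ} [Fact p.Prime] (hp : p ≠ 2) :
    (derivative^[(p - 1) / 2] (gaussProd p (X : (ZMod p)[X]))).eval 1 = -1 := by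
  obtain ⟨m, hm⟩ := (Fact.out : p.Prime).odd_of_ne_two hp
  have hfactor : gaussProd p (X : (ZMod p)[X]) = (X - C 1) ^ m *
      ∏ k ∈ range m, (∑ i ∈ range (2 * k + 1), X ^ i - ∑ i ∈ range (p - (2 * k + 1)), X ^ i) := by
    rw [gaussProd, show (p - 1) / 2 = m by omega]
    conv_rhs => rw [← card_range m, ← prod_const, card_range, ← prod_mul_distrib]
    refine prod_congr rfl fun k _ => ?_
    rw [mul_sub, C_1, mul_geom_sum, mul_geom_sum, sub_sub_sub_cancel_right]
  have heval (k : ℕ) (hk : k ∈ range m) :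
      ((2 * k + 1 : ℕ) : ZMod p) - ((p - (2 * k + 1) : ℕ) : ZMod p) = (2 * (2 * k + 1) : ℕ) := by
    rw [mem_range] at hk
    rw [Nat.cast_sub (by omega)]
    simp
    ring
  have hderiv := aeval_iterate_derivative_self (gaussProd p (X : (ZMod p)[X])) m (A := ZMod p)
    (r := 1) (by rw [Algebra.algebraMap_self, Polynomial.map_id]; exact hfactor)
  rw [show (p - 1) / 2 = m by omega, ← coe_aeval_eq_eval, hderiv, eval_prod]
  simp only [eval_sub, eval_finsetSum, eval_pow, eval_X, one_pow, sum_const, card_range,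
    nsmul_eq_mul, mul_one]
  rw [prod_congr rfl heval, ← Nat.cast_prod, ← Nat.cast_mul,
    factorial_mul_prod_range_two_mul_odd, show 2 * m = p - 1 by omega, ZMod.wilsons_lemma]

theorem gaussSum_legendreChar_eq_gaussProd {p : ℕ} [hp : Fact p.Prime] (hp2 : p ≠ 2) {R : Type*}
    [Field R] [CharZero R] {ψ : AddChar (ZMod p) R} (hψ : ψ ≠ 1) :
    gaussSum (legendreChar p R) ψ = gaussProd p (ψ 1) := by
  have hodd : Odd p := hp.out.odd_of_ne_two hp2
  have hζ : IsPrimitiveRoot (ψ 1) p := by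
    rw [IsPrimitiveRoot.iff_orderOf]
    refine orderOf_eq_prime ?_ ((AddChar.zmod_char_ne_one_iff p ψ).mp hψ)
    rw [← AddChar.map_nsmul_eq_pow, nsmul_one, ZMod.natCast_self, AddChar.map_zero_eq_one]
  have hsq : gaussSum (legendreChar p R) ψ ^ 2 = gaussProd p (ψ 1) ^ 2 := by
    rw [gaussSum_sq (legendreChar_ne_one hp2 R) (isQuadratic_legendreChar R) (.of_ne_one hψ),
      gaussProd_sq hodd hζ, legendreChar_neg_one hp2, ZMod.card,
      show p / 2 = (p - 1) / 2 by have := Nat.odd_iff.mp hodd; omega]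
  refine (sq_eq_sq_iff_eq_or_eq_neg.mp hsq).resolve_right fun hneg => ?_
  -- Modulo `p` the two polynomials have the same `(p - 1) / 2`-th derivative `-1` at `1`.
  have hdvd := X_sub_one_pow_dvd_map_of_aeval_eq_zero (F := feketePoly p + gaussProd p X) hζ (by
    rw [map_add, aeval_feketePoly, hneg, ← AlgHom.coe_toRingHom, map_gaussProd,
      AlgHom.coe_toRingHom, aeval_X, neg_add_cancel])
  obtain ⟨Q, hQ⟩ := hdvd
  have hderiv := aeval_iterate_derivative_of_lt ((feketePoly p + gaussProd p X).map
    (Int.castRingHom (ZMod p))) (p - 1) (A := ZMod p) (r := 1)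
    (by rw [Algebra.algebraMap_self, Polynomial.map_id]; exact hQ)
    (k := (p - 1) / 2) (by have := hp.out.two_le; omega)
  rw [coe_aeval_eq_eval, Polynomial.map_add, ← coe_mapRingHom, map_gaussProd, coe_mapRingHom,
    map_X, iterate_map_add, eval_add, eval_iterate_derivative_feketePoly hp2,
    eval_iterate_derivative_gaussProd hp2, ← neg_add, neg_eq_zero, one_add_one_eq_two] at hderiv
  exact Ring.two_ne_zero (by rwa [ZMod.ringChar_zmod_n]) hderiv

lemma stdAddChar_natCast {N : ℕ} [NeZero N] (j : ℕ) :
    ZMod.stdAddChar (j : ZMod N) = Complex.exp (2 * π * Complex.I / N) ^ j := by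
  rw [← Int.cast_natCast, ZMod.stdAddChar_coe, ← Complex.exp_nat_mul, Int.cast_natCast]
  congr 1
  ring

theorem gaussSum_legendreChar_stdAddChar {p : ℕ} [hp : Fact p.Prime] (hp4 : p % 4 = 1) :
    gaussSum (legendreChar p ℂ) ZMod.stdAddChar = (√p : ℂ) := by
  have : Fact (1 < p) := ⟨hp.out.one_lt⟩
  rw [gaussSum_legendreChar_eq_gaussProd (by omega) fun h =>
      ZMod.isPrimitive_stdAddChar p one_ne_zero (by rw [h]; ext; simp),
    ← Nat.cast_one, stdAddChar_natCast, pow_one, gaussProd_exp_eq_sqrt hp4]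

/-! ### Dirichlet `L`-functions at `1` -/

section BoundedPartialSums

open Filter Topology MeasureTheory

variable {a : ℕ → ℂ} {B : ℝ}

lemma measurable_sum_Icc_floor (a : ℕ → ℂ) :
    Measurable fun t : ℝ => ∑ k ∈ Icc 0 ⌊t⌋₊, a k :=
  (measurable_from_nat (f := fun n => ∑ k ∈ Icc 0 n, a k)).comp Nat.measurable_floor

lemma tendsto_integral_sum_mul_cpow_nhdsGT_one (hB : ∀ n, ‖∑ k ∈ Icc 0 n, a k‖ ≤ B) :
    Tendsto (fun s : ℝ => ∫ t in Set.Ioi (1 : ℝ),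
        (∑ k ∈ Icc 0 ⌊t⌋₊, a k) * (t : ℂ) ^ (-((s : ℂ) + 1))) (𝓝[>] 1)
      (𝓝 (∫ t in Set.Ioi (1 : ℝ), (∑ k ∈ Icc 0 ⌊t⌋₊, a k) * (t : ℂ) ^ (-2 : ℂ))) := by
  refine tendsto_integral_filter_of_dominated_convergence (fun t : ℝ => B * t ^ (-2 : ℝ))
    (.of_forall fun s => (measurable_sum_Icc_floor a).aestronglyMeasurable.mul
      (by fun_prop : Measurable fun t : ℝ => (t : ℂ) ^ (-((s : ℂ) + 1))).aestronglyMeasurable)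
    ?_ ((integrableOn_Ioi_rpow_of_lt (by norm_num) one_pos).const_mul B) ?_
  · filter_upwards [self_mem_nhdsWithin] with s (hs : 1 < s)
    filter_upwards [ae_restrict_mem measurableSet_Ioi] with t (ht : 1 < t)
    rw [norm_mul, Complex.norm_cpow_eq_rpow_re_of_pos (by linarith)]
    have hexp : t ^ (-((s : ℂ) + 1)).re ≤ t ^ (-2 : ℝ) :=
      Real.rpow_le_rpow_of_exponent_le ht.le (by simp; linarith)
    exact mul_le_mul (hB _) hexp (by positivity) ((norm_nonneg _).trans (hB 0))
  · filter_upwards [ae_restrict_mem measurableSet_Ioi] with t (ht : 1 < t)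
    have hcont : ContinuousAt (fun s : ℝ => (t : ℂ) ^ (-((s : ℂ) + 1))) 1 :=
      .const_cpow (by fun_prop) (.inl (mod_cast (by linarith : t ≠ 0)))
    have hval : (t : ℂ) ^ (-((1 : ℝ) + 1 : ℂ)) = (t : ℂ) ^ (-2 : ℂ) := by norm_num
    exact (hval ▸ hcont.tendsto.mono_left nhdsWithin_le_nhds).const_mul _

lemma tendsto_LSeries_nhdsGT_one (ha : a 0 = 0) (hB : ∀ n, ‖∑ k ∈ Icc 0 n, a k‖ ≤ B)
    (hsum : ∀ s : ℝ, 1 < s → LSeriesSummable a s) :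
    Tendsto (fun s : ℝ => LSeries a s) (𝓝[>] 1)
      (𝓝 (∫ t in Set.Ioi (1 : ℝ), (∑ k ∈ Icc 0 ⌊t⌋₊, a k) * (t : ℂ) ^ (-2 : ℂ))) := by
  have hIcc (n : ℕ) : ∑ k ∈ Icc 1 n, a k = ∑ k ∈ Icc 0 n, a k := by
    rw [← sum_Ioc_add_eq_sum_Icc n.zero_le, ha, add_zero]
    rfl
  have hid : Tendsto (fun s : ℝ => (s : ℂ)) (𝓝[>] 1) (𝓝 1) :=
    (Complex.continuous_ofReal.tendsto 1).mono_left nhdsWithin_le_nhds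
  rw [← one_mul (∫ t in Set.Ioi (1 : ℝ), _)]
  refine (hid.mul (tendsto_integral_sum_mul_cpow_nhdsGT_one hB)).congr' ?_
  filter_upwards [self_mem_nhdsWithin] with s (hs : 1 < s)
  rw [LSeries_eq_mul_integral a le_rfl (by simp; linarith) (hsum s hs)]
  · simp only [hIcc]
  · simp only [hIcc, Real.rpow_zero]
    exact (Asymptotics.isBigO_one_iff ℝ).mpr (isBoundedUnder_of ⟨B, hB⟩)

lemma hasDerivAt_inv_ofReal {t : ℝ} (ht : t ≠ 0) :
    HasDerivAt (fun t : ℝ => (t : ℂ)⁻¹) (-(t : ℂ) ^ (-2 : ℂ)) t := by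
  convert (hasDerivAt_inv (Complex.ofReal_ne_zero.mpr ht)).comp_ofReal using 1
  rw [Complex.cpow_neg]
  norm_cast

lemma tendsto_sum_div_atTop (ha : a 0 = 0) (hB : ∀ n, ‖∑ k ∈ Icc 0 n, a k‖ ≤ B) :
    Tendsto (fun n : ℕ => ∑ k ∈ range n, a k / k) atTop
      (𝓝 (∫ t in Set.Ioi (1 : ℝ), (∑ k ∈ Icc 0 ⌊t⌋₊, a k) * (t : ℂ) ^ (-2 : ℂ))) := by
  have hderiv {t : ℝ} (ht : 1 ≤ t) : deriv (fun t : ℝ => (t : ℂ)⁻¹) t = -(t : ℂ) ^ (-2 : ℂ) :=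
    (hasDerivAt_inv_ofReal (by linarith)).deriv
  have hlocInt : LocallyIntegrableOn (deriv fun t : ℝ => (t : ℂ)⁻¹) (Set.Ici 1) := by
    refine ContinuousOn.locallyIntegrableOn (.congr (fun t (ht : 1 ≤ t) => ?_)
      fun t ht => hderiv ht) measurableSet_Ici
    exact (ContinuousAt.cpow Complex.continuous_ofReal.continuousAt continuousAt_const
      (.inl (by simp; linarith))).neg.continuousWithinAt
  have hbdry : Tendsto (fun n : ℕ => ((n : ℝ) : ℂ)⁻¹ * ∑ k ∈ Icc 0 n, a k) atTop (𝓝 0) := by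
    have hlim := (tendsto_inv_atTop_nhds_zero_nat (𝕜 := ℝ)).mul_const B
    rw [zero_mul] at hlim
    refine squeeze_zero_norm (fun n => ?_) hlim
    rw [norm_mul, norm_inv, Complex.norm_real, Real.norm_natCast]
    gcongr
    exact hB n
  have hO : (fun t : ℝ => deriv (fun t : ℝ => (t : ℂ)⁻¹) t * ∑ k ∈ Icc 0 ⌊t⌋₊, a k) =O[atTop]
      fun t => t ^ (-2 : ℝ) := by
    refine .of_bound B ?_
    filter_upwards [eventually_ge_atTop 1] with t ht
    rw [hderiv ht, norm_mul, norm_neg, Complex.norm_cpow_eq_rpow_re_of_pos (by linarith), mul_comm,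
      Real.norm_of_nonneg (by positivity)]
    exact mul_le_mul_of_nonneg_right (hB _) (by positivity)
  have habel := tendsto_sum_mul_atTop_nhds_one_sub_integral₀ (𝕜 := ℂ) a
    (f := fun t : ℝ => (t : ℂ)⁻¹) ha
    (fun t (ht : 1 ≤ t) => (hasDerivAt_inv_ofReal (by linarith)).differentiableAt)
    hlocInt hbdry hO ⟨Set.Ioi 1, Ioi_mem_atTop 1, integrableOn_Ioi_rpow_of_lt (by norm_num) one_pos⟩
  rw [← tendsto_add_atTop_iff_nat 1]
  convert habel using 2 with n
  · rw [Nat.range_eq_Icc_zero_sub_one _ (by omega)]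
    exact sum_congr rfl fun k _ => by rw [Complex.ofReal_natCast, div_eq_inv_mul]
  · rw [zero_sub, ← integral_neg]
    refine setIntegral_congr_fun measurableSet_Ioi fun t (ht : 1 < t) => ?_
    rw [hderiv ht.le]
    ring

end BoundedPartialSums

section DirichletCharacter

open Filter Topology

variable {N : ℕ} [NeZero N] {χ : DirichletCharacter ℂ N}

lemma sum_zmod_eq_sum_range {M : Type*} [AddCommMonoid M] (f : ZMod N → M) :
    ∑ x, f x = ∑ j ∈ range N, f j := by
  refine sum_bij' (fun x _ => x.val) (fun j _ => (j : ZMod N)) ?_ ?_ ?_ ?_ ?_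
  · exact fun x _ => mem_range.mpr (ZMod.val_lt x)
  · simp
  · simp
  · exact fun j hj => ZMod.val_cast_of_lt (mem_range.mp hj)
  · simp

lemma norm_sum_dirichletCharacter_le (hχ : χ ≠ 1) (n : ℕ) : ‖∑ k ∈ range n, χ k‖ ≤ N := by
  have periodic (q r : ℕ) : ∑ k ∈ range (N * q + r), χ k = ∑ k ∈ range r, χ k := by
    induction q generalizing r with
    | zero => simp
    | succ q ih =>
      rw [show N * (q + 1) + r = N * q + (N + r) by ring, ih, sum_range_add,
        ← sum_zmod_eq_sum_range (fun x => χ x), MulChar.sum_eq_zero_of_ne_one hχ, zero_add]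
      simp
  rw [← Nat.div_add_mod n N, periodic]
  calc ‖∑ k ∈ range (n % N), χ k‖
    _ ≤ ∑ k ∈ range (n % N), 1 := norm_sum_le_of_le _ fun k _ => χ.norm_le_one k
    _ ≤ N := by simpa using (Nat.mod_lt n (NeZero.pos N)).le

lemma apply_zero_of_ne_one (hχ : χ ≠ 1) : χ 0 = 0 := by
  have : Nontrivial (ZMod N) := by
    refine ZMod.nontrivial_iff.mpr ?_
    rintro rfl
    exact hχ (DirichletCharacter.level_one χ)
  exact MulChar.map_zero χ

lemma tendsto_sum_dirichletCharacter_div (hχ : χ ≠ 1) :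
    Tendsto (fun n : ℕ => ∑ k ∈ range n, χ k / k) atTop (𝓝 (χ.LFunction 1)) := by
  have h0 : χ ((0 : ℕ) : ZMod N) = 0 := by rw [Nat.cast_zero, apply_zero_of_ne_one hχ]
  have hB (n : ℕ) : ‖∑ k ∈ Icc 0 n, χ k‖ ≤ N := by
    simpa [Nat.range_eq_Icc_zero_sub_one] using norm_sum_dirichletCharacter_le hχ (n + 1)
  have hL : Tendsto (fun s : ℝ => LSeries (χ ·) s) (𝓝[>] 1) (𝓝 (χ.LFunction 1)) := by
    have hcont := ((DirichletCharacter.differentiable_LFunction hχ).continuous.comp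
      Complex.continuous_ofReal).tendsto 1
    refine (hcont.mono_left (nhdsWithin_le_nhds (s := Set.Ioi 1))).congr' ?_
    filter_upwards [self_mem_nhdsWithin] with s hs
    exact χ.LFunction_eq_LSeries (by simpa using hs)
  have hsum (s : ℝ) (hs : 1 < s) : LSeriesSummable (χ ·) s :=
    χ.LSeriesSummable_of_one_lt_re (by simpa using hs)
  rw [tendsto_nhds_unique hL (tendsto_LSeries_nhdsGT_one h0 hB hsum)]
  exact tendsto_sum_div_atTop h0 hB

lemma continuousAt_log_one_sub_ofReal_mul {z : ℂ} (hz : ‖z‖ = 1) (hz1 : z ≠ 1) :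
    ContinuousAt (fun x : ℝ => Complex.log (1 - x * z)) 1 := by
  have hre : z.re ≠ 1 := fun h => hz1 <| by
    rw [Complex.eq_coe_norm_of_nonneg (Complex.re_eq_norm.mp (h.trans hz.symm)), hz,
      Complex.ofReal_one]
  have hslit : 1 - z ∈ Complex.slitPlane :=
    .inl (by simpa using lt_of_le_of_ne ((Complex.re_le_norm z).trans hz.le) hre)
  exact ContinuousAt.clog (by fun_prop) (by simpa using hslit)

theorem LFunction_inv_one_mul_gaussSum (hχ : χ ≠ 1) (hprim : χ.IsPrimitive) :
    χ⁻¹.LFunction 1 * gaussSum χ ZMod.stdAddChar =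
      -∑ x, χ x * Complex.log (1 - ZMod.stdAddChar x) := by
  have habel := Complex.tendsto_tsum_powerSeries_nhdsWithin_lt
    (tendsto_sum_dirichletCharacter_div (inv_ne_one.mpr hχ))
  rw [tendsto_map'_iff] at habel
  refine tendsto_nhds_unique (habel.mul_const _) ?_
  have hlim : Tendsto (fun r : ℝ => ∑ x, χ x * -Complex.log (1 - r * ZMod.stdAddChar x)) (𝓝[<] 1)
      (𝓝 (-∑ x, χ x * Complex.log (1 - ZMod.stdAddChar x))) := by
    simp only [← sum_neg_distrib, ← mul_neg]
    refine tendsto_finsetSum _ fun x _ => ?_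
    by_cases hx : x = 0
    · simp [hx, apply_zero_of_ne_one hχ]
    have hx1 : ZMod.stdAddChar x ≠ 1 := by
      simpa using (ZMod.injective_stdAddChar (N := N)).ne hx
    have := (continuousAt_log_one_sub_ofReal_mul (AddChar.norm_apply _ x) hx1).tendsto.mono_left
      (nhdsWithin_le_nhds (s := Set.Iio 1))
    simpa using this.neg.const_mul (χ x)
  refine hlim.congr' ?_
  filter_upwards [self_mem_nhdsWithin, mem_nhdsWithin_of_mem_nhds (Ioi_mem_nhds zero_lt_one)]
    with r (hr1 : r < 1) (hr0 : 0 < r)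
  have hseries (x : ZMod N) : HasSum (fun n : ℕ => χ x * ((r * ZMod.stdAddChar x) ^ n / n))
      (χ x * -Complex.log (1 - r * ZMod.stdAddChar x)) := by
    refine (Complex.hasSum_taylorSeries_neg_log ?_).mul_left _
    rwa [norm_mul, AddChar.norm_apply, mul_one, Complex.norm_real, Real.norm_of_nonneg hr0.le]
  rw [← (hasSum_sum fun x _ => hseries x).tsum_eq, Function.comp_apply, ← tsum_mul_right]
  refine tsum_congr fun n => Eq.symm ?_
  calc χ⁻¹ n / n * r ^ n * gaussSum χ ZMod.stdAddChar
    _ = gaussSum χ (ZMod.stdAddChar.mulShift n) * (r ^ n / n) := by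
      rw [gaussSum_mulShift_of_isPrimitive _ hprim]
      ring
    _ = ∑ x, χ x * ((r * ZMod.stdAddChar x) ^ n / n) := by
      rw [gaussSum, sum_mul]
      refine sum_congr rfl fun x _ => ?_
      rw [AddChar.mulShift_apply, ← nsmul_eq_mul, AddChar.map_nsmul_eq_pow, mul_pow]
      ring

end DirichletCharacter

/-! ### Counting ideals of given norm -/

section CoprimeNorms

open Ideal

lemma mul_sup_eq_left_of_sup_eq_top {R : Type*} [CommRing R] {I J M : Ideal R} (h : J ⊔ M = ⊤)
    (hM : M ≤ I) : I * J ⊔ M = I := by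
  refine le_antisymm (sup_le mul_le_left hM) ?_
  calc I = I * J ⊔ I * M := by rw [← Ideal.mul_sup, h, mul_top]
    _ ≤ I * J ⊔ M := sup_le_sup_left mul_le_right _

lemma sup_mul_sup_eq_of_sup_eq_top {R : Type*} [CommRing R] {L M N : Ideal R} (h : M ⊔ N = ⊤)
    (hMN : M * N ≤ L) : (L ⊔ M) * (L ⊔ N) = L := by
  apply le_antisymm
  · rw [Ideal.sup_mul, Ideal.mul_sup, Ideal.mul_sup]
    exact sup_le (sup_le mul_le_left mul_le_left) (sup_le mul_le_right hMN)
  · calc L = M * L ⊔ L * N := by rw [mul_comm M, ← Ideal.mul_sup, h, mul_top]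
      _ ≤ (L ⊔ M) * (L ⊔ N) :=
        sup_le (mul_mono le_sup_right le_sup_left) (mul_mono le_sup_left le_sup_right)

lemma span_natCast_sup_span_natCast_eq_top (S : Type*) [CommRing S] {m n : ℕ}
    (hmn : m.Coprime n) : span {(m : S)} ⊔ span {(n : S)} = ⊤ := by
  rw [← isCoprime_iff_sup_eq, isCoprime_span_singleton_iff]
  simpa using (Nat.isCoprime_iff_coprime.mpr hmn).map (Int.castRingHom S)

variable {S : Type*} [CommRing S] [IsDedekindDomain S] [Module.Free ℤ S]

lemma span_natCast_le_of_absNorm_eq {I : Ideal S} {k : ℕ} (h : absNorm I = k) :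
    span {(k : S)} ≤ I :=
  h ▸ span_singleton_absNorm_le I

variable {m n : ℕ}

lemma sup_span_mul_sup_span_of_absNorm_eq (hmn : m.Coprime n) {L : Ideal S}
    (hL : absNorm L = m * n) : (L ⊔ span {(m : S)}) * (L ⊔ span {(n : S)}) = L := by
  refine sup_mul_sup_eq_of_sup_eq_top (span_natCast_sup_span_natCast_eq_top S hmn) ?_
  rw [span_singleton_mul_span_singleton, ← Nat.cast_mul]
  exact span_natCast_le_of_absNorm_eq hL

variable [Module.Finite ℤ S]

lemma absNorm_sup_span_natCast_coprime (hmn : m.Coprime n) (L : Ideal S) :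
    (absNorm (L ⊔ span {(m : S)})).Coprime n := by
  refine Nat.Coprime.coprime_dvd_left ?_ (hmn.pow_left (Module.finrank ℤ S))
  rw [← absNorm_span_natCast]
  exact absNorm_dvd_absNorm_of_le le_sup_right

lemma absNorm_sup_span_natCast (hmn : m.Coprime n) {L : Ideal S} (hL : absNorm L = m * n) :
    absNorm (L ⊔ span {(m : S)}) = m := by
  have hN : absNorm (L ⊔ span {(m : S)}) * absNorm (L ⊔ span {(n : S)}) = m * n := by
    rw [← map_mul, sup_span_mul_sup_span_of_absNorm_eq hmn hL, hL]
  apply Nat.dvd_antisymm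
  · exact (absNorm_sup_span_natCast_coprime hmn L).dvd_of_dvd_mul_right (hN ▸ dvd_mul_right _ _)
  · exact (absNorm_sup_span_natCast_coprime hmn.symm L).symm.dvd_of_dvd_mul_right
      (hN ▸ dvd_mul_right _ _)

lemma card_absNorm_eq_mul (hmn : m.Coprime n) :
    Nat.card {I : Ideal S // absNorm I = m * n} =
      Nat.card {I : Ideal S // absNorm I = m} * Nat.card {I : Ideal S // absNorm I = n} := by
  have recover {k l : ℕ} (hkl : k.Coprime l) {I J : Ideal S} (hI : absNorm I = k)
      (hJ : absNorm J = l) : I * J ⊔ span {(k : S)} = I := by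
    refine mul_sup_eq_left_of_sup_eq_top ?_ (span_natCast_le_of_absNorm_eq hI)
    rw [eq_top_iff, ← span_natCast_sup_span_natCast_eq_top S hkl.symm]
    exact sup_le_sup_right (span_natCast_le_of_absNorm_eq hJ) _
  rw [← Nat.card_prod]
  refine Nat.card_congr
    { toFun L := (⟨L.1 ⊔ span {(m : S)}, absNorm_sup_span_natCast hmn L.2⟩,
        ⟨L.1 ⊔ span {(n : S)}, absNorm_sup_span_natCast hmn.symm (L.2.trans (mul_comm m n))⟩)
      invFun x := ⟨x.1.1 * x.2.1, by rw [map_mul, x.1.2, x.2.2]⟩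
      left_inv L := Subtype.ext (sup_span_mul_sup_span_of_absNorm_eq hmn L.2)
      right_inv x := Prod.ext (Subtype.ext (recover hmn x.1.2 x.2.2))
        (Subtype.ext ((congrArg (· ⊔ span {(n : S)}) (mul_comm x.1.1 x.2.1)).trans
          (recover hmn.symm x.2.2 x.1.2))) }

open ArithmeticFunction in
lemma isMultiplicative_card_absNorm_eq (S : Type*) [CommRing S] [IsDedekindDomain S]
    [Module.Free ℤ S] [Module.Finite ℤ S] {R : Type*} [CommSemiring R] :
    IsMultiplicative
      (toArithmeticFunction fun n => (Nat.card {I : Ideal S // absNorm I = n} : R)) := by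
  refine IsMultiplicative.iff_ne_zero.mpr ⟨by simp [toArithmeticFunction, absNorm_eq_one_iff], ?_⟩
  intro m n hm hn hmn
  simp [toArithmeticFunction, hm, hn, card_absNorm_eq_mul hmn]

end CoprimeNorms

section PrimePowerNorms

open Ideal

variable {S : Type*} [CommRing S] [IsDedekindDomain S] [Module.Free ℤ S] {q k : ℕ}

lemma dvd_span_natCast_pow_of_absNorm_eq {I : Ideal S} (hI : absNorm I = q ^ k) :
    I ∣ span {(q : S)} ^ k := by
  rw [Ideal.dvd_iff_le, span_singleton_pow, ← Nat.cast_pow]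
  exact span_natCast_le_of_absNorm_eq hI

lemma prime_of_absNorm_eq_prime (hq : q.Prime) {P : Ideal S} (hP : absNorm P = q) : Prime P := by
  refine prime_of_isPrime ?_ (isPrime_of_irreducible_absNorm (hP ▸ hq))
  rintro rfl
  exact hq.ne_zero (hP.symm.trans absNorm_bot)

lemma card_absNorm_eq_prime_pow_of_ramified (hq : q.Prime) {P : Ideal S} (hP : absNorm P = q)
    (hPP : P ^ 2 = span {(q : S)}) : Nat.card {I : Ideal S // absNorm I = q ^ k} = 1 := by
  have eq_pow (I : Ideal S) (hI : absNorm I = q ^ k) : I = P ^ k := by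
    have hdvd := dvd_span_natCast_pow_of_absNorm_eq hI
    rw [← hPP, ← pow_mul, dvd_prime_pow (prime_of_absNorm_eq_prime hq hP)] at hdvd
    obtain ⟨i, -, hi⟩ := hdvd
    obtain rfl := associated_iff_eq.mp hi
    rw [map_pow, hP] at hI
    rw [Nat.pow_right_injective hq.two_le hI]
  rw [Nat.card_eq_one_iff_exists]
  exact ⟨⟨P ^ k, by rw [map_pow, hP]⟩, fun I => Subtype.ext (eq_pow I I.2)⟩

lemma card_absNorm_eq_prime_pow_of_split (hq : q.Prime) {P Q : Ideal S} (hP : absNorm P = q)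
    (hQ : absNorm Q = q) (hne : P ≠ Q) (hPQ : P * Q = span {(q : S)}) :
    Nat.card {I : Ideal S // absNorm I = q ^ k} = k + 1 := by
  have pP := prime_of_absNorm_eq_prime hq hP
  have pQ := prime_of_absNorm_eq_prime hq hQ
  have absNorm_pow_mul_pow (i j : ℕ) : absNorm (P ^ i * Q ^ j) = q ^ (i + j) := by
    rw [map_mul, map_pow, map_pow, hP, hQ, ← pow_add]
  have pow_mul_pow_ne {i j : ℕ} (hij : i < j) (l l' : ℕ) : P ^ i * Q ^ l ≠ P ^ j * Q ^ l' := by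
    intro h
    rw [← Nat.add_sub_cancel' hij.le, pow_add, mul_assoc] at h
    have hdvd : P ∣ Q ^ l := by
      rw [mul_left_cancel₀ (pow_ne_zero i pP.ne_zero) h]
      exact (dvd_pow_self P (Nat.sub_pos_of_lt hij).ne').mul_right _
    exact hne (associated_iff_eq.mp
      ((pP.dvd_prime_iff_associated pQ).mp (pP.dvd_of_dvd_pow hdvd)))
  rw [← Nat.card_fin (k + 1)]
  refine (Nat.card_congr (.ofBijective (fun i : Fin (k + 1) =>
    ⟨P ^ (i : ℕ) * Q ^ (k - i), by rw [absNorm_pow_mul_pow, Nat.add_sub_cancel' i.is_le]⟩)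
      ⟨fun i j h => ?_, fun ⟨I, hI⟩ => ?_⟩)).symm
  · rw [Subtype.mk.injEq] at h
    rcases lt_trichotomy i j with hij | hij | hij
    · exact absurd h (pow_mul_pow_ne hij _ _)
    · exact hij
    · exact absurd h.symm (pow_mul_pow_ne hij _ _)
  · have hdvd := dvd_span_natCast_pow_of_absNorm_eq hI
    rw [← hPQ, mul_pow] at hdvd
    obtain ⟨A, B, hA, hB, rfl⟩ := exists_dvd_and_dvd_of_dvd_mul hdvd
    obtain ⟨i, -, hA⟩ := (dvd_prime_pow pP k).mp hA
    obtain ⟨j, -, hB⟩ := (dvd_prime_pow pQ k).mp hB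
    obtain rfl := associated_iff_eq.mp hA
    obtain rfl := associated_iff_eq.mp hB
    rw [absNorm_pow_mul_pow] at hI
    obtain rfl := Nat.pow_right_injective hq.two_le hI
    exact ⟨⟨i, by omega⟩, Subtype.ext (by simp)⟩

variable [Module.Finite ℤ S]

lemma card_absNorm_eq_prime_pow_of_inert (hq : q.Prime) (hrank : Module.finrank ℤ S = 2)
    (hprime : Prime (span {(q : S)})) :
    Nat.card {I : Ideal S // absNorm I = q ^ k} = if Even k then 1 else 0 := by
  have absNorm_pow (i : ℕ) : absNorm (span {(q : S)} ^ i) = q ^ (2 * i) := by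
    rw [map_pow, absNorm_span_natCast, hrank, ← pow_mul]
  have eq_pow (I : Ideal S) (hI : absNorm I = q ^ k) : ∃ i, k = 2 * i ∧ I = span {(q : S)} ^ i := by
    obtain ⟨i, -, hi⟩ := (dvd_prime_pow hprime k).mp (dvd_span_natCast_pow_of_absNorm_eq hI)
    obtain rfl := associated_iff_eq.mp hi
    rw [absNorm_pow] at hI
    exact ⟨i, (Nat.pow_right_injective hq.two_le hI).symm, rfl⟩
  split_ifs with hk
  · obtain ⟨j, rfl⟩ := even_iff_two_dvd.mp hk
    rw [Nat.card_eq_one_iff_exists]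
    refine ⟨⟨span {(q : S)} ^ j, absNorm_pow j⟩, fun ⟨I, hI⟩ => Subtype.ext ?_⟩
    obtain ⟨i, hi, rfl⟩ := eq_pow I hI
    exact congrArg (span {(q : S)} ^ ·) (Nat.eq_of_mul_eq_mul_left two_pos hi).symm
  · have : IsEmpty {I : Ideal S // absNorm I = q ^ k} := ⟨fun ⟨I, hI⟩ => by
      obtain ⟨i, hi, -⟩ := eq_pow I hI
      exact hk (even_iff_two_dvd.mpr ⟨i, hi⟩)⟩
    exact Nat.card_of_isEmpty

end PrimePowerNorms

/-! ### Ideals of quadratic rings -/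

section QuadraticRing

open Ideal

variable {S : Type*} [CommRing S] [IsDedekindDomain S] [Module.Free ℤ S] {q k : ℕ}

lemma nonempty_ringHom_zmod_of_absNorm_eq (hq : q.Prime) {P : Ideal S} (hP : absNorm P = q) :
    Nonempty (S →+* ZMod q) := by
  have hcard : Nat.card (S ⧸ P) = q := by rw [← hP, absNorm_apply, Submodule.cardQuot_apply]
  have : Finite (S ⧸ P) := Nat.finite_of_card_ne_zero (hcard ▸ hq.ne_zero)
  have := Fintype.ofFinite (S ⧸ P)
  let e := ZMod.ringEquivOfPrime (S ⧸ P) hq (by rw [← Nat.card_eq_fintype_card, hcard])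
  exact ⟨e.symm.toRingHom.comp (Ideal.Quotient.mk P)⟩

variable [Module.Finite ℤ S]

lemma card_absNorm_eq_prime_pow_of_sq_eq (hq : q.Prime) (hrank : Module.finrank ℤ S = 2) {δ : S}
    (hδ : δ ^ 2 = q) : Nat.card {I : Ideal S // absNorm I = q ^ k} = 1 := by
  have hsq : span {δ} ^ 2 = span {(q : S)} := by rw [span_singleton_pow, hδ]
  refine card_absNorm_eq_prime_pow_of_ramified hq (Nat.pow_left_injective two_ne_zero ?_) hsq
  change absNorm (span {δ}) ^ 2 = q ^ 2
  rw [← map_pow, hsq, absNorm_span_natCast, hrank]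

lemma prime_span_natCast_of_forall_absNorm_ne (hq : q.Prime) (hrank : Module.finrank ℤ S = 2)
    (h : ∀ P : Ideal S, absNorm P ≠ q) : Prime (span {(q : S)}) := by
  have hNq : absNorm (span {(q : S)}) = q ^ 2 := by rw [absNorm_span_natCast, hrank]
  have hq2 : q ^ 2 ≠ 0 := pow_ne_zero 2 hq.ne_zero
  have hne : span {(q : S)} ≠ ⊤ := by
    rw [Ne, ← absNorm_eq_one_iff, hNq]
    exact (Nat.one_lt_pow two_ne_zero hq.one_lt).ne'
  obtain ⟨P, hmax, hle⟩ := exists_le_maximal _ hne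
  have hdvd : absNorm P ∣ q ^ 2 := hNq ▸ absNorm_dvd_absNorm_of_le hle
  have hP0 : P ≠ ⊥ := by
    rintro rfl
    rw [absNorm_bot, zero_dvd_iff] at hdvd
    exact hq2 hdvd
  obtain ⟨i, hi, hN⟩ := (Nat.dvd_prime_pow hq).mp hdvd
  interval_cases i
  · exact absurd (absNorm_eq_one_iff.mp hN) hmax.ne_top
  · exact absurd (hN.trans (pow_one q)) (h P)
  · obtain ⟨J, hJ⟩ := Ideal.dvd_iff_le.mpr hle
    rw [hJ, map_mul, hN] at hNq
    have hJ1 : J = ⊤ := absNorm_eq_one_iff.mp ((mul_eq_left₀ hq2).mp hNq)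
    rw [hJ, hJ1, mul_top]
    exact prime_of_isPrime hP0 hmax.isPrime

lemma card_absNorm_eq_prime_pow_of_forall_sq_ne (hq : q.Prime) (hrank : Module.finrank ℤ S = 2)
    {θ : S} {t n : ℤ} (hθ : θ ^ 2 = t * θ + n) (hc : ∀ c : ZMod q, c ^ 2 ≠ t * c + n) :
    Nat.card {I : Ideal S // absNorm I = q ^ k} = if Even k then 1 else 0 := by
  refine card_absNorm_eq_prime_pow_of_inert hq hrank
    (prime_span_natCast_of_forall_absNorm_ne hq hrank fun P hP => ?_)
  obtain ⟨φ⟩ := nonempty_ringHom_zmod_of_absNorm_eq hq hP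
  exact hc (φ θ) (by simpa using congrArg φ hθ)

lemma span_pair_mul_span_pair {R : Type*} [CommRing R] {x a b : R} (hx : x ∣ a * b)
    (hcop : IsCoprime x (a - b)) : span {x, a} * span {x, b} = span {x} := by
  apply le_antisymm
  · rw [span_mul_span', span_le]
    rintro _ ⟨y, rfl | rfl, z, rfl | rfl, rfl⟩
    · exact mem_span_singleton.mpr (dvd_mul_right _ _)
    · exact mem_span_singleton.mpr (dvd_mul_right _ _)
    · exact mem_span_singleton.mpr (dvd_mul_left _ _)
    · exact mem_span_singleton.mpr hx
  · obtain ⟨u, v, huv⟩ := hcop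
    have hxeq : x = u * (x * x) + v * (a * x - x * b) := by linear_combination -x * huv
    have hxa : x ∈ span {x, a} := subset_span (.inl rfl)
    have hxb : x ∈ span {x, b} := subset_span (.inl rfl)
    have ha : a ∈ span {x, a} := subset_span (.inr rfl)
    have hb : b ∈ span {x, b} := subset_span (.inr rfl)
    have hmem := add_mem (mul_mem_left _ u (Ideal.mul_mem_mul hxa hxb))
      (mul_mem_left _ v (sub_mem (Ideal.mul_mem_mul ha hxb) (Ideal.mul_mem_mul hxa hb)))
    rwa [← hxeq, ← span_singleton_le_iff_mem] at hmem

lemma card_absNorm_eq_prime_pow_of_dvd_mul (hq : q.Prime) (hrank : Module.finrank ℤ S = 2)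
    {x y : S} (hxy : (q : S) ∣ x * y) (hcop : IsCoprime (q : S) (x - y)) (hx : ¬ (q : S) ∣ x)
    (hy : ¬ (q : S) ∣ y) : Nat.card {I : Ideal S // absNorm I = q ^ k} = k + 1 := by
  have hPQ := span_pair_mul_span_pair hxy hcop
  set P := span {(q : S), x}
  set Q := span {(q : S), y}
  have hqP : (q : S) ∈ P := subset_span (.inl rfl)
  have hxP : x ∈ P := subset_span (.inr rfl)
  have hyQ : y ∈ Q := subset_span (.inr rfl)
  have hP1 : absNorm P ≠ 1 := by
    intro hP
    rw [absNorm_eq_one_iff.mp hP, Ideal.top_mul] at hPQ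
    exact hy (mem_span_singleton.mp (hPQ ▸ hyQ))
  have hQ1 : absNorm Q ≠ 1 := by
    intro hQ
    rw [absNorm_eq_one_iff.mp hQ, Ideal.mul_top] at hPQ
    exact hx (mem_span_singleton.mp (hPQ ▸ hxP))
  have hN : absNorm P * absNorm Q = q ^ 2 := by
    rw [← map_mul, hPQ, absNorm_span_natCast, hrank]
  obtain ⟨hNP, hNQ⟩ := (hq.mul_eq_prime_sq_iff hP1 hQ1).mp hN
  refine card_absNorm_eq_prime_pow_of_split hq hNP hNQ (fun hPeqQ => hP1 ?_) hPQ
  obtain ⟨u, v, huv⟩ := hcop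
  rw [absNorm_eq_one_iff, eq_top_iff_one, ← huv]
  exact add_mem (mul_mem_left _ _ hqP) (mul_mem_left _ _ (sub_mem hxP (hPeqQ ▸ hyQ)))

lemma not_natCast_dvd_basis_one_sub_intCast {S : Type*} [CommRing S] {q : ℕ}
    (b : Module.Basis (Fin 2) ℤ S) (hb0 : b 0 = 1) (hq : q ≠ 1) (d : ℤ) :
    ¬ (q : S) ∣ b 1 - d := by
  rintro ⟨w, hw⟩
  have hcoord := congrArg (fun x => b.repr x 1) hw
  have hd : (d : S) = d • b 0 := by rw [hb0, zsmul_one]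
  have hqw : (q : S) * w = (q : ℤ) • w := by simp
  simp only [hd, hqw, map_sub, map_smul, Module.Basis.repr_self, Finsupp.sub_apply,
    Finsupp.smul_apply, Finsupp.single_eq_same, ne_eq, one_ne_zero, not_false_eq_true,
    Finsupp.single_eq_of_ne, mul_zero, sub_zero, smul_eq_mul] at hcoord
  exact hq (by simpa using Int.isUnit_iff_natAbs_eq.mp (.of_mul_eq_one _ hcoord.symm))

variable {t n : ℤ} (b : Module.Basis (Fin 2) ℤ S)

lemma card_absNorm_eq_prime_pow_of_sq_eq_of_two_mul_ne (hb0 : b 0 = 1)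
    (hb1 : b 1 ^ 2 = t * b 1 + n) (hq : q.Prime) {c : ZMod q} (hc : c ^ 2 = t * c + n)
    (hct : 2 * c ≠ t) : Nat.card {I : Ideal S // absNorm I = q ^ k} = k + 1 := by
  obtain ⟨c, rfl⟩ := ZMod.intCast_surjective c
  have hroot : (q : ℤ) ∣ c ^ 2 - t * c - n := by
    rw [← ZMod.intCast_zmod_eq_zero_iff_dvd]; push_cast; rw [hc]; ring
  have hcop : IsCoprime (q : ℤ) (2 * c - t) := by
    rw [(Nat.prime_iff_prime_int.mp hq).irreducible.coprime_iff_not_dvd,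
      ← ZMod.intCast_zmod_eq_zero_iff_dvd]
    push_cast
    rwa [sub_eq_zero]
  refine card_absNorm_eq_prime_pow_of_dvd_mul hq
    (by simpa using Module.finrank_eq_card_basis b) (x := b 1 - (t - c : ℤ)) (y := b 1 - c) ?_ ?_
    (not_natCast_dvd_basis_one_sub_intCast b hb0 hq.ne_one _)
    (not_natCast_dvd_basis_one_sub_intCast b hb0 hq.ne_one _)
  · have hprod : (b 1 - (t - c : ℤ)) * (b 1 - c) = -((c ^ 2 - t * c - n : ℤ) : S) := by
      push_cast
      linear_combination hb1
    rw [hprod, dvd_neg]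
    simpa using map_dvd (Int.castRingHom S) hroot
  · have hsub : b 1 - (t - c : ℤ) - (b 1 - c) = ((2 * c - t : ℤ) : S) := by push_cast; ring
    rw [hsub]
    simpa using hcop.map (Int.castRingHom S)

lemma exists_sq_eq_add_iff_isSquare {F : Type*} [Field F] (h2 : (2 : F) ≠ 0) (m : F) :
    (∃ c, c ^ 2 = c + m) ↔ IsSquare (4 * m + 1) := by
  constructor
  · rintro ⟨c, hc⟩
    exact ⟨2 * c - 1, by linear_combination -4 * hc⟩
  · rintro ⟨y, hy⟩
    refine ⟨(y + 1) / 2, ?_⟩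
    field_simp
    linear_combination -hy

lemma exists_sq_eq_add_intCast_iff_legendreSym_eq_one {p : ℕ} [Fact p.Prime] (hp4 : p % 4 = 1)
    {m : ℤ} (hm : (p : ℤ) = 4 * m + 1) [Fact q.Prime] (hqp : q ≠ p) :
    (∃ c : ZMod q, c ^ 2 = c + m) ↔ legendreSym p q = 1 := by
  rcases eq_or_ne q 2 with rfl | hq2
  · have hsq (c : ZMod 2) : c ^ 2 = c := ZMod.pow_card c
    simp only [hsq, left_eq_add, exists_const]
    rw [ZMod.intCast_zmod_eq_zero_iff_dvd, 
      legendreSym.eq_one_iff p (by exact_mod_cast ZMod.prime_ne_zero p 2 hqp.symm)]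
    have := ZMod.exists_sq_eq_two_iff (p := p) (by omega)
    simp only [Nat.cast_ofNat, Int.cast_ofNat, this]
    omega
  · have h2 : (2 : ZMod q) ≠ 0 := by exact_mod_cast ZMod.prime_ne_zero q 2 hq2
    rw [exists_sq_eq_add_iff_isSquare h2, ← legendreSym.quadratic_reciprocity_one_mod_four hp4 hq2,
      legendreSym.eq_one_iff q (by exact_mod_cast ZMod.prime_ne_zero q p hqp), hm]
    push_cast
    rfl

lemma card_absNorm_eq_prime_pow {p : ℕ} [Fact p.Prime] (hp4 : p % 4 = 1) {m : ℤ}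
    (hm : (p : ℤ) = 4 * m + 1) (hb0 : b 0 = 1) (hb1 : b 1 ^ 2 = b 1 + m) (hq : q.Prime) (k : ℕ) :
    (Nat.card {I : Ideal S // absNorm I = q ^ k} : ℤ) =
      ∑ i ∈ range (k + 1), legendreSym p q ^ i := by
  have hrank : Module.finrank ℤ S = 2 := by simpa using Module.finrank_eq_card_basis b
  have hb1' : b 1 ^ 2 = (1 : ℤ) * b 1 + m := by simpa using hb1
  rcases eq_or_ne q p with rfl | hqp
  · have hδ : (2 * b 1 - 1) ^ 2 = (q : S) := by
      rw [← Int.cast_natCast, hm]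
      push_cast
      linear_combination 4 * hb1
    have hchi : legendreSym q q = 0 := (legendreSym.eq_zero_iff q q).mpr (by simp)
    simp [card_absNorm_eq_prime_pow_of_sq_eq hq hrank hδ, hchi, sum_range_succ']
  have : Fact q.Prime := ⟨hq⟩
  have hroot := exists_sq_eq_add_intCast_iff_legendreSym_eq_one hp4 hm hqp
  by_cases hchi : legendreSym p q = 1
  · obtain ⟨c, hc⟩ := hroot.mpr hchi
    have h2c : 2 * c ≠ (1 : ℤ) := by
      intro h
      have hp : ((p : ℤ) : ZMod q) = 0 := by
        rw [hm]
        push_cast at h ⊢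
        linear_combination -4 * hc + (2 * c - 1) * h
      exact ZMod.prime_ne_zero q p hqp (by exact_mod_cast hp)
    simp [card_absNorm_eq_prime_pow_of_sq_eq_of_two_mul_ne b hb0 hb1' hq (by simpa using hc) h2c,
      hchi]
  · have hno (c : ZMod q) : c ^ 2 ≠ (1 : ℤ) * c + m := by
      intro hc
      exact hchi (hroot.mp ⟨c, by simpa using hc⟩)
    have hchi' : legendreSym p q = -1 := (legendreSym.eq_one_or_neg_one p
      (by exact_mod_cast ZMod.prime_ne_zero p q hqp.symm)).resolve_left hchi
    rw [card_absNorm_eq_prime_pow_of_forall_sq_ne hq hrank hb1' hno, hchi', neg_one_geom_sum]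
    by_cases hk : Even k <;> simp [hk, Nat.even_add_one]

end QuadraticRing

/-! ### The ring of integers of a quadratic field -/

section QuadraticBasis

variable {R A : Type*} [CommRing R] [CommRing A] [Algebra R A] {t n : R}
  (b : Module.Basis (Fin 2) R A)

lemma leftMulMatrix_of_basis_one_sq (hb0 : b 0 = 1)
    (hb1 : b 1 ^ 2 = algebraMap R A t * b 1 + algebraMap R A n) (z : A) :
    Algebra.leftMulMatrix b z =
      !![b.repr z 0, n * b.repr z 1; b.repr z 1, b.repr z 0 + t * b.repr z 1] := by
  have hz : z = b.repr z 0 • b 0 + b.repr z 1 • b 1 := by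
    rw [← Fin.sum_univ_two (fun i => b.repr z i • b i), b.sum_repr]
  have hmul : z * b 1 = (n * b.repr z 1) • b 0 + (b.repr z 0 + t * b.repr z 1) • b 1 := by
    simp only [hb0, Algebra.smul_def, map_add, map_mul] at hz ⊢
    linear_combination hz * b 1 + algebraMap R A (b.repr z 1) * hb1
  ext i j
  rw [Algebra.leftMulMatrix_eq_repr_mul]
  fin_cases j
  · fin_cases i <;> simp [hb0]
  · fin_cases i <;> simp [hmul]

lemma trace_of_basis_one_sq (hb0 : b 0 = 1)
    (hb1 : b 1 ^ 2 = algebraMap R A t * b 1 + algebraMap R A n) (z : A) :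
    Algebra.trace R A z = 2 * b.repr z 0 + t * b.repr z 1 := by
  rw [Algebra.trace_eq_matrix_trace b, leftMulMatrix_of_basis_one_sq b hb0 hb1,
    Matrix.trace_fin_two_of]
  ring

lemma norm_of_basis_one_sq (hb0 : b 0 = 1)
    (hb1 : b 1 ^ 2 = algebraMap R A t * b 1 + algebraMap R A n) (z : A) :
    Algebra.norm R z = b.repr z 0 ^ 2 + t * b.repr z 0 * b.repr z 1 - n * b.repr z 1 ^ 2 := by
  rw [Algebra.norm_eq_matrix_det b, leftMulMatrix_of_basis_one_sq b hb0 hb1, Matrix.det_fin_two_of]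
  ring

lemma discr_of_basis_one_sq (hb0 : b 0 = 1)
    (hb1 : b 1 ^ 2 = algebraMap R A t * b 1 + algebraMap R A n) :
    Algebra.discr R b = t ^ 2 + 4 * n := by
  have hsq : b 1 * b 1 = n • b 0 + t • b 1 := by
    rw [hb0, Algebra.smul_def, Algebra.smul_def, ← pow_two, hb1]
    ring
  have htrace0 : Algebra.trace R A (b 0) = 2 := by simp [trace_of_basis_one_sq b hb0 hb1]
  have htrace1 : Algebra.trace R A (b 1) = t := by simp [trace_of_basis_one_sq b hb0 hb1]
  have htrace2 : Algebra.trace R A (b 1 * b 1) = 2 * n + t ^ 2 := by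
    rw [hsq, map_add, map_smul, map_smul, htrace0, htrace1, smul_eq_mul, smul_eq_mul]
    ring
  simp only [Algebra.discr_def, Matrix.det_fin_two, Algebra.traceMatrix_apply,
    Algebra.traceForm_apply, htrace2]
  simp only [hb0, mul_one, one_mul, htrace1]
  rw [← hb0, htrace0]
  ring

end QuadraticBasis

lemma exists_basis_one_of_notMem_range {F K : Type*} [Field F] [Field K] [Algebra F K]
    (hrank : Module.finrank F K = 2) {x : K} (hx : x ∉ (algebraMap F K).range) :
    ∃ b : Module.Basis (Fin 2) F K, b 0 = 1 ∧ b 1 = x := by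
  have hli : LinearIndependent F ![1, x] := by
    rw [LinearIndependent.pair_iff' one_ne_zero]
    exact fun a ha => hx ⟨a, (Algebra.algebraMap_eq_smul_one a).trans ha⟩
  exact ⟨basisOfLinearIndependentOfCardEqFinrank hli (by simp [hrank]), by simp, by simp⟩

lemma isIntegral_of_sq_eq {A : Type*} [CommRing A] {x : A} {t n : ℤ} (h : x ^ 2 = t * x + n) :
    IsIntegral ℤ x := by
  refine ⟨X ^ 2 - (C t * X + C n), by monicity!, ?_⟩
  simp only [eval₂_sub, eval₂_add, eval₂_mul, eval₂_pow, eval₂_X, eval₂_C, algebraMap_int_eq,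
    Int.coe_castRingHom, h, sub_self]

lemma mem_range_intCast_of_sq_eq {x : ℚ} {t n : ℤ} (h : x ^ 2 = t * x + n) :
    ∃ k : ℤ, (k : ℚ) = x :=
  IsIntegrallyClosed.isIntegral_iff.mp (isIntegral_of_sq_eq h)

lemma mem_range_intCast_of_squarefree_mul_sq {d a : ℤ} (hd : Squarefree d) {y : ℚ}
    (h : d * y ^ 2 = a) : ∃ k : ℤ, (k : ℚ) = y := by
  have hd0 : (d : ℚ) ≠ 0 := by exact_mod_cast hd.ne_zero
  obtain ⟨c, hc⟩ : ∃ c : ℤ, (c : ℚ) = d * y :=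
    mem_range_intCast_of_sq_eq (t := 0) (n := d * a) (by
      push_cast
      linear_combination (d : ℚ) * h)
  have hc2 : c ^ 2 = d * a := by
    have : (c : ℚ) ^ 2 = d * a := by rw [hc]; linear_combination (d : ℚ) * h
    exact_mod_cast this
  obtain ⟨k, rfl⟩ := (hd.dvd_pow_iff_dvd two_ne_zero).mp (hc2 ▸ dvd_mul_right d a)
  exact ⟨k, mul_left_cancel₀ hd0 (by exact_mod_cast hc)⟩

section IntegralBasis

variable {K : Type*} [Field K] [NumberField K] {t n : ℤ}

/- If `z = x + y θ` is integral with trace `T` and norm `N`, then `(t² + 4n) y² = T² - 4N`, so `y`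
is an integer, and then `x` is a root of the monic polynomial `X² + (t y) X - (n y² + N)`. -/
lemma repr_mem_range_intCast_of_isIntegral (b : Module.Basis (Fin 2) ℚ K) (hb0 : b 0 = 1)
    (hb1 : b 1 ^ 2 = t * b 1 + n) (hsf : Squarefree (t ^ 2 + 4 * n)) {z : K}
    (hz : IsIntegral ℤ z) : (∃ k : ℤ, (k : ℚ) = b.repr z 0) ∧ ∃ l : ℤ, (l : ℚ) = b.repr z 1 := by
  have hb1' : b 1 ^ 2 = algebraMap ℚ K t * b 1 + algebraMap ℚ K n := by simpa using hb1
  obtain ⟨T, hT⟩ := IsIntegrallyClosed.isIntegral_iff.mp (Algebra.isIntegral_trace (L := ℚ) hz)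
  obtain ⟨N, hN⟩ := IsIntegrallyClosed.isIntegral_iff.mp (Algebra.isIntegral_norm ℚ hz)
  rw [trace_of_basis_one_sq b hb0 hb1', eq_intCast] at hT
  rw [norm_of_basis_one_sq b hb0 hb1', eq_intCast] at hN
  obtain ⟨l, hl⟩ := mem_range_intCast_of_squarefree_mul_sq hsf (y := b.repr z 1)
    (a := T ^ 2 - 4 * N) (by push_cast; rw [hT, hN]; ring)
  refine ⟨mem_range_intCast_of_sq_eq (t := -(t * l)) (n := n * l ^ 2 + N) ?_, l, hl⟩
  push_cast
  rw [hl, hN]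
  ring

lemma exists_integralBasis_of_squarefree (b : Module.Basis (Fin 2) ℚ K) (hb0 : b 0 = 1)
    (hb1 : b 1 ^ 2 = t * b 1 + n) (hsf : Squarefree (t ^ 2 + 4 * n)) :
    ∃ B : Module.Basis (Fin 2) ℤ (𝓞 K), B 0 = 1 ∧ B 1 ^ 2 = t * B 1 + n := by
  obtain ⟨θ, hθ⟩ : ∃ θ : 𝓞 K, algebraMap (𝓞 K) K θ = b 1 := 
    ⟨⟨b 1, isIntegral_of_sq_eq hb1⟩, rfl⟩
  have hli : LinearIndependent ℤ ![1, θ] := by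
    have hcomp : (IsScalarTower.toAlgHom ℤ (𝓞 K) K).toLinearMap ∘ ![1, θ] = b := by
      ext i
      fin_cases i <;> simp [hb0, hθ]
    refine .of_comp (IsScalarTower.toAlgHom ℤ (𝓞 K) K).toLinearMap ?_
    rw [hcomp]
    exact b.linearIndependent.restrict_scalars' ℤ
  have hspan : ⊤ ≤ Submodule.span ℤ (Set.range ![1, θ]) := by
    intro z _
    obtain ⟨⟨x, hx⟩, y, hy⟩ := repr_mem_range_intCast_of_isIntegral b hb0 hb1 hsf z.isIntegral_coe
    have hz : z = x • 1 + y • θ := by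
      apply RingOfIntegers.coe_injective
      rw [← b.sum_repr (algebraMap (𝓞 K) K z), Fin.sum_univ_two, ← hx, ← hy, hb0, ← hθ]
      simp [Algebra.smul_def]
    rw [Matrix.range_cons_cons_empty, Submodule.mem_span_pair]
    exact ⟨x, y, hz.symm⟩
  refine ⟨.mk hli hspan, by simp, RingOfIntegers.coe_injective ?_⟩
  simpa [hθ] using hb1

lemma exists_integralBasis_of_sq_eq_prime {p : ℕ} [Fact p.Prime] {m : ℤ} (hm : (p : ℤ) = 4 * m + 1)
    (hrank : Module.finrank ℚ K = 2) {s : K} (hs : s ^ 2 = p) :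
    ∃ b : Module.Basis (Fin 2) ℤ (𝓞 K), b 0 = 1 ∧ b 1 ^ 2 = b 1 + m := by
  have hmK : (p : K) = 4 * m + 1 := by exact_mod_cast congrArg (Int.cast : ℤ → K) hm
  have hpQ : ¬ IsSquare (p : ℚ) := by
    rw [Rat.isSquare_natCast_iff]
    exact (Fact.out : p.Prime).prime.not_isSquare
  have hθ : (1 + s) / 2 ∉ (algebraMap ℚ K).range := by
    rintro ⟨r, hr⟩
    refine hpQ ⟨2 * r - 1, (algebraMap ℚ K).injective ?_⟩
    simp only [map_natCast, map_mul, map_sub, map_ofNat, map_one, hr, ← hs]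
    ring
  obtain ⟨b, hb0, hb1⟩ := exists_basis_one_of_notMem_range hrank hθ
  obtain ⟨B, hB0, hB1⟩ := exists_integralBasis_of_squarefree (t := 1) (n := m) b hb0
    (by rw [hb1, Int.cast_one]; linear_combination (hs + hmK) / 4)
    (by
      rw [one_pow, add_comm, ← hm, Int.squarefree_natCast]
      exact (Fact.out : p.Prime).prime.squarefree)
  exact ⟨B, hB0, by simpa using hB1⟩

end IntegralBasis

/-! ### The unit group and the residue of a real quadratic field -/

section RealQuadraticUnits

open NumberField.Units NumberField.InfinitePlace

variable {K : Type*} [Field K]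

/-- The homomorphism `(𝓞 K)ˣ →* ℝˣ` induced by a real embedding `f` of `K`; it realises the units
of `K` as real numbers. -/
noncomputable def unitEmbedding (f : K →+* ℝ) : (𝓞 K)ˣ →* ℝˣ :=
  Units.map (f.comp (algebraMap (𝓞 K) K))

/-- `ε` is the smallest unit greater than `1` in the real embedding `f`. For a real quadratic field
this is the usual fundamental unit. -/
def IsFundamentalUnit (f : K →+* ℝ) (ε : (𝓞 K)ˣ) : Prop :=
  1 < (unitEmbedding f ε : ℝ) ∧
    ∀ u : (𝓞 K)ˣ, 1 < (unitEmbedding f u : ℝ) → (unitEmbedding f ε : ℝ) ≤ unitEmbedding f u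

lemma unitEmbedding_injective (f : K →+* ℝ) : Function.Injective (unitEmbedding f) :=
  Units.map_injective (f.injective.comp RingOfIntegers.coe_injective)

lemma unitEmbedding_neg (f : K →+* ℝ) (u : (𝓞 K)ˣ) : unitEmbedding f (-u) = -unitEmbedding f u :=
  Units.ext (map_neg (f.comp (algebraMap (𝓞 K) K)) (u : 𝓞 K))

lemma abs_unitEmbedding_of_mem_torsion (f : K →+* ℝ) {u : (𝓞 K)ˣ} (hu : u ∈ torsion K) :
    |(unitEmbedding f u : ℝ)| = 1 := by
  obtain ⟨n, hn, hun⟩ := isOfFinOrder_iff_pow_eq_one.1 hu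
  refine (pow_eq_one_iff_of_nonneg (abs_nonneg _) hn.ne').1 ?_
  rw [← abs_pow, ← Units.val_pow_eq_pow_val, ← map_pow, hun, map_one, Units.val_one, abs_one]

lemma eq_one_or_eq_neg_one_of_mem_torsion (f : K →+* ℝ) {u : (𝓞 K)ˣ} (hu : u ∈ torsion K) :
    u = 1 ∨ u = -1 := by
  refine (eq_or_eq_neg_of_abs_eq (abs_unitEmbedding_of_mem_torsion f hu)).imp
    (fun h => unitEmbedding_injective f ?_) (fun h => unitEmbedding_injective f ?_)
  · exact Units.ext (by simpa using h)
  · exact Units.ext (by simpa [unitEmbedding_neg] using h)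

lemma exists_one_lt_unitEmbedding_log_eq_abs (f : K →+* ℝ) {u : (𝓞 K)ˣ}
    (hu : Real.log (unitEmbedding f u : ℝ) ≠ 0) :
    ∃ v : (𝓞 K)ˣ, 1 < (unitEmbedding f v : ℝ) ∧
      Real.log (unitEmbedding f v : ℝ) = |Real.log (unitEmbedding f u : ℝ)| := by
  obtain ⟨v, hv⟩ : ∃ v : (𝓞 K)ˣ,
      Real.log (unitEmbedding f v : ℝ) = |Real.log (unitEmbedding f u : ℝ)| := by
    rcases le_total 0 (Real.log (unitEmbedding f u : ℝ)) with h | h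
    · exact ⟨u, (abs_of_nonneg h).symm⟩
    · exact ⟨u⁻¹, by rw [map_inv, Units.val_inv_eq_inv_val, Real.log_inv, abs_of_nonpos h]⟩
  obtain ⟨w, hw0, hw⟩ : ∃ w : (𝓞 K)ˣ, 0 < (unitEmbedding f w : ℝ) ∧
      Real.log (unitEmbedding f w : ℝ) = |Real.log (unitEmbedding f u : ℝ)| := by
    rcases lt_or_gt_of_ne (unitEmbedding f v).ne_zero with h | h
    · exact ⟨-v, by simpa [unitEmbedding_neg] using h, by simpa [unitEmbedding_neg] using hv⟩
    · exact ⟨v, h, hv⟩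
  exact ⟨w, (Real.log_pos_iff hw0.le).1 (hw ▸ abs_pos.2 hu), hw⟩

lemma log_eq_abs_log_of_isFundamentalUnit {f : K →+* ℝ} {ε u : (𝓞 K)ˣ}
    (hε : IsFundamentalUnit f ε)
    (hu : ∃ k : ℤ, Real.log (unitEmbedding f ε : ℝ) = k * Real.log (unitEmbedding f u : ℝ)) :
    Real.log (unitEmbedding f ε : ℝ) = |Real.log (unitEmbedding f u : ℝ)| := by
  have hpos : 0 < Real.log (unitEmbedding f ε : ℝ) := Real.log_pos hε.1
  obtain ⟨k, hk⟩ := hu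
  have hku : (k : ℝ) ≠ 0 ∧ Real.log (unitEmbedding f u : ℝ) ≠ 0 :=
    mul_ne_zero_iff.1 (hk ▸ hpos.ne')
  apply le_antisymm
  · obtain ⟨v, hv1, hv⟩ := exists_one_lt_unitEmbedding_log_eq_abs f hku.2
    exact hv ▸ Real.log_le_log (zero_lt_one.trans hε.1) (hε.2 v hv1)
  · have hk1 : 1 ≤ |(k : ℝ)| := mod_cast Int.one_le_abs (Int.cast_ne_zero.1 hku.1)
    rw [← abs_of_pos hpos, hk, abs_mul]
    exact le_mul_of_one_le_left (abs_nonneg _) hk1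

/-- The infinite place `x ↦ |f x|` attached to a real embedding `f`. -/
noncomputable def realPlace (f : K →+* ℝ) : InfinitePlace K :=
  InfinitePlace.mk (Complex.ofRealHom.comp f)

lemma realPlace_apply (f : K →+* ℝ) (x : K) : realPlace f x = |f x| := by
  simp [realPlace, InfinitePlace.apply]

lemma isReal_realPlace (f : K →+* ℝ) : (realPlace f).IsReal :=
  isReal_mk_iff.2 (RingHom.ext fun x => Complex.conj_ofReal (f x))

variable [NumberField K]

lemma torsionOrder_eq_two_of_realEmbedding (f : K →+* ℝ) : torsionOrder K = 2 := by
  have hne : (1 : torsion K) ≠ ⟨-1, neg_one_mem_torsion⟩ := by simp [← Subtype.coe_ne_coe]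
  rw [torsionOrder, Nat.card_eq_two_iff]
  refine ⟨1, ⟨-1, neg_one_mem_torsion⟩, hne, Set.eq_univ_of_forall fun u => ?_⟩
  exact (eq_one_or_eq_neg_one_of_mem_torsion f u.2).imp Subtype.ext Subtype.ext

lemma nrRealPlaces_pos (f : K →+* ℝ) : 0 < nrRealPlaces K := by
  classical exact Fintype.card_pos_iff.2 ⟨⟨realPlace f, isReal_realPlace f⟩⟩

lemma nrRealPlaces_eq_two (hrank : Module.finrank ℚ K = 2) (f : K →+* ℝ) :
    nrRealPlaces K = 2 := by
  have hpos := nrRealPlaces_pos f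
  have hcard := card_add_two_mul_card_eq_rank K
  omega

lemma nrComplexPlaces_eq_zero (hrank : Module.finrank ℚ K = 2) (f : K →+* ℝ) :
    nrComplexPlaces K = 0 := by
  have hpos := nrRealPlaces_pos f
  have hcard := card_add_two_mul_card_eq_rank K
  omega

lemma exists_log_unitEmbedding_eq_intCast_mul (f : K →+* ℝ) (hrank : Units.rank K = 1)
    (i : Fin (Units.rank K)) (v : (𝓞 K)ˣ) :
    ∃ k : ℤ, Real.log (unitEmbedding f v : ℝ) =
      k * Real.log (unitEmbedding f (fundSystem K i) : ℝ) := by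
  have hsub : Subsingleton (Fin (Units.rank K)) := by rw [hrank]; infer_instance
  obtain ⟨⟨z, g⟩, hv, -⟩ := exist_unique_eq_mul_prod K v
  refine ⟨g i, ?_⟩
  rw [Fintype.prod_subsingleton _ i] at hv
  rw [hv, map_mul, map_zpow, Units.val_mul, Units.val_zpow_eq_zpow_val,
    Real.log_mul (Units.ne_zero _) (zpow_ne_zero _ (Units.ne_zero _)), ← Real.log_abs,
    abs_unitEmbedding_of_mem_torsion f z.2, Real.log_one, zero_add, Real.log_zpow]

lemma exists_regulator_eq_abs_log (hrank : Module.finrank ℚ K = 2) (f : K →+* ℝ) :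
    ∃ u : (𝓞 K)ˣ, regulator K = |Real.log (unitEmbedding f u : ℝ)| ∧
      ∀ v : (𝓞 K)ˣ, ∃ k : ℤ,
        Real.log (unitEmbedding f v : ℝ) = k * Real.log (unitEmbedding f u : ℝ) := by
  classical
  have hcard : Fintype.card (InfinitePlace K) = 2 := by
    rw [card_eq_nrRealPlaces_add_nrComplexPlaces, nrRealPlaces_eq_two hrank f,
      nrComplexPlaces_eq_zero hrank f]
  have hunits : Units.rank K = 1 := by rw [Units.rank, hcard]
  obtain ⟨w', hw'⟩ :=
    Fintype.exists_ne_of_one_lt_card (by rw [hcard]; exact one_lt_two) (realPlace f)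
  have hcard' : Fintype.card {w // w ≠ w'} = 1 := by
    rw [Fintype.card_subtype_compl, hcard, Fintype.card_subtype_eq]
  have hsub : Subsingleton {w // w ≠ w'} := Fintype.card_le_one_iff_subsingleton.1 hcard'.le
  let e : {w // w ≠ w'} ≃ Fin (Units.rank K) :=
    Fintype.equivOfCardEq (by rw [hcard', Fintype.card_fin, hunits])
  refine ⟨fundSystem K (e ⟨realPlace f, hw'.symm⟩), ?_,
    exists_log_unitEmbedding_eq_intCast_mul f hunits _⟩
  rw [regulator_eq_det K w' e, Matrix.det_eq_elem_of_subsingleton _ ⟨realPlace f, hw'.symm⟩,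
    Matrix.of_apply, (isReal_realPlace f).mult_eq_one, Nat.cast_one, one_mul, realPlace_apply,
    Real.log_abs]
  rfl

lemma regulator_eq_log_of_isFundamentalUnit (hrank : Module.finrank ℚ K = 2) {f : K →+* ℝ}
    {ε : (𝓞 K)ˣ} (hε : IsFundamentalUnit f ε) :
    regulator K = Real.log (unitEmbedding f ε : ℝ) := by
  obtain ⟨u, hreg, hu⟩ := exists_regulator_eq_abs_log hrank f
  rw [hreg, log_eq_abs_log_of_isFundamentalUnit hε (hu ε)]

lemma dedekindZeta_residue_mul_sqrt_abs_discr (hrank : Module.finrank ℚ K = 2) {f : K →+* ℝ}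
    {ε : (𝓞 K)ˣ} (hε : IsFundamentalUnit f ε) :
    dedekindZeta_residue K * √|(discr K : ℝ)| =
      2 * classNumber K * Real.log (unitEmbedding f ε : ℝ) := by
  have hd : √|(discr K : ℝ)| ≠ 0 :=
    Real.sqrt_ne_zero'.2 (abs_pos.2 (Int.cast_ne_zero.2 (discr_ne_zero K)))
  rw [dedekindZeta_residue_def, nrRealPlaces_eq_two hrank f, nrComplexPlaces_eq_zero hrank f,
    torsionOrder_eq_two_of_realEmbedding f, regulator_eq_log_of_isFundamentalUnit hrank hε]
  push_cast
  field_simp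

end RealQuadraticUnits

/-! ### The class number formula -/

section ZetaFactorization

open Filter Topology ArithmeticFunction DirichletCharacter

lemma toArithmeticFunction_one {R : Type*} [Semiring R] :
    toArithmeticFunction (fun _ => (1 : R)) =
      ((zeta : ArithmeticFunction ℕ) : ArithmeticFunction R) := by
  ext n
  simp [toArithmeticFunction, natCoe_apply, zeta_apply]

variable {K : Type*} [Field K] [NumberField K]

lemma dedekindZeta_residue_eq_LFunction_one {N : ℕ} [NeZero N] {χ : DirichletCharacter ℂ N}
    (hχ : χ ≠ 1)
    (hK : ∀ s : ℂ, 1 < s.re → dedekindZeta K s = riemannZeta s * LSeries (fun n => χ n) s) :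
    (dedekindZeta_residue K : ℂ) = χ.LFunction 1 := by
  have hofReal : Tendsto (fun s : ℝ => (s : ℂ)) (𝓝[>] 1) (𝓝[≠] 1) := by
    refine tendsto_nhdsWithin_iff.2 ⟨?_, ?_⟩
    · exact (Complex.continuous_ofReal.tendsto' 1 1 Complex.ofReal_one).mono_left
        nhdsWithin_le_nhds
    · filter_upwards [self_mem_nhdsWithin] with s hs
      exact Complex.ofReal_ne_one.2 (Set.mem_Ioi.1 hs).ne'
  have hL : Tendsto (fun s : ℝ => χ.LFunction s) (𝓝[>] 1) (𝓝 (χ.LFunction 1)) :=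
    ((differentiable_LFunction hχ).continuous.tendsto 1).comp
      (hofReal.mono_right nhdsWithin_le_nhds)
  have hprod := (riemannZeta_residue_one.comp hofReal).mul hL
  rw [one_mul] at hprod
  refine tendsto_nhds_unique (tendsto_sub_one_mul_dedekindZeta_nhdsGT K) (hprod.congr' ?_)
  filter_upwards [self_mem_nhdsWithin] with s hs
  have hs1 : 1 < (s : ℂ).re := hs
  rw [Function.comp_apply, hK s hs1, LFunction_eq_LSeries χ hs1, mul_assoc]

variable {p : ℕ} [Fact p.Prime] {m : ℤ}

lemma card_absNorm_eq_zeta_mul_legendreChar (b : Module.Basis (Fin 2) ℤ (𝓞 K)) (hp4 : p % 4 = 1)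
    (hm : (p : ℤ) = 4 * m + 1) (hb0 : b 0 = 1) (hb1 : b 1 ^ 2 = b 1 + m) :
    toArithmeticFunction (fun n => (Nat.card {I : Ideal (𝓞 K) // Ideal.absNorm I = n} : ℂ)) =
      toArithmeticFunction (fun _ => (1 : ℂ)) *
        toArithmeticFunction (fun n => legendreChar p ℂ n) := by
  rw [toArithmeticFunction_one, IsMultiplicative.eq_iff_eq_on_prime_powers _
    (isMultiplicative_card_absNorm_eq (𝓞 K)) _
    (isMultiplicative_zeta.natCast.mul (isMultiplicative_toArithmeticFunction _))]
  intro q k hq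
  rw [coe_zeta_mul_apply, Nat.sum_divisors_prime_pow hq]
  simp only [toArithmeticFunction, coe_mk, pow_ne_zero _ hq.ne_zero, if_false]
  have hcard := congrArg (Int.cast : ℤ → ℂ) (card_absNorm_eq_prime_pow b hp4 hm hb0 hb1 hq k)
  push_cast at hcard
  refine hcard.trans (sum_congr rfl fun i _ => ?_)
  rw [Nat.cast_pow, map_pow, ← legendreChar_intCast, Int.cast_natCast]

lemma dedekindZeta_eq_riemannZeta_mul_LSeries (b : Module.Basis (Fin 2) ℤ (𝓞 K))
    (hp4 : p % 4 = 1) (hm : (p : ℤ) = 4 * m + 1) (hb0 : b 0 = 1) (hb1 : b 1 ^ 2 = b 1 + m)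
    {s : ℂ} (hs : 1 < s.re) :
    dedekindZeta K s = riemannZeta s * LSeries (fun n => legendreChar p ℂ n) s := by
  rw [← LSeries_one_eq_riemannZeta hs, ← LSeries_convolution' (LSeriesSummable_one_iff.2 hs)
    (LSeriesSummable_of_one_lt_re _ hs)]
  refine LSeries_congr (fun {n} hn => ?_) s
  refine Eq.trans ?_ (DFunLike.congr_fun
    (card_absNorm_eq_zeta_mul_legendreChar b hp4 hm hb0 hb1) n)
  simp [toArithmeticFunction, hn]

end ZetaFactorization

section ClassNumberFormula

/-- The logarithm of the absolute value of the cyclotomic number `1 - e^(2πix/N)`; at `x = 0` it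
takes the junk value `log 0 = 0`. -/
noncomputable def logNormOneSub {N : ℕ} [NeZero N] (x : ZMod N) : ℝ :=
  Real.log ‖1 - ZMod.stdAddChar x‖

variable {p : ℕ} [Fact p.Prime]

lemma isPrimitive_of_ne_one {R : Type*} [CommMonoidWithZero R] {χ : DirichletCharacter R p}
    (hχ : χ ≠ 1) : χ.IsPrimitive :=
  ((Nat.dvd_prime Fact.out).1 χ.conductor_dvd_level).resolve_left
    (hχ ∘ χ.eq_one_iff_conductor_eq_one.2)

lemma legendreChar_eq_ofReal (x : ZMod p) : legendreChar p ℂ x = (legendreChar p ℝ x : ℂ) := by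
  obtain ⟨a, rfl⟩ := ZMod.intCast_surjective x
  rw [legendreChar_intCast, legendreChar_intCast, Complex.ofReal_intCast]

lemma LFunction_legendreChar_one_mul_sqrt (hp4 : p % 4 = 1) :
    (legendreChar p ℂ).LFunction 1 * (√p : ℂ) =
      -∑ x, legendreChar p ℂ x * Complex.log (1 - ZMod.stdAddChar x) := by
  have hχ : legendreChar p ℂ ≠ 1 := legendreChar_ne_one (by omega) ℂ
  have h := LFunction_inv_one_mul_gaussSum hχ (isPrimitive_of_ne_one hχ)
  rwa [(isQuadratic_legendreChar ℂ).inv, gaussSum_legendreChar_stdAddChar hp4] at h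

variable {K : Type*} [Field K] [NumberField K]

theorem sum_legendreChar_mul_logNormOneSub (hp4 : p % 4 = 1) (hrank : Module.finrank ℚ K = 2)
    (hsq : ∃ x : K, x ^ 2 = p) {f : K →+* ℝ} {ε : (𝓞 K)ˣ} (hε : IsFundamentalUnit f ε) :
    ∑ x, legendreChar p ℝ x * logNormOneSub x =
      -(2 * classNumber K * Real.log (unitEmbedding f ε : ℝ)) := by
  obtain ⟨s, hs⟩ := hsq
  obtain ⟨m, hm⟩ : ∃ m : ℤ, (p : ℤ) = 4 * m + 1 := ⟨p / 4, by omega⟩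
  obtain ⟨b, hb0, hb1⟩ := exists_integralBasis_of_sq_eq_prime hm hrank hs
  have hdiscr : discr K = p := by
    rw [← discr_eq_discr K b, discr_of_basis_one_sq (t := 1) (n := m) b hb0 (by simpa using hb1),
      hm]
    ring
  have hresidue : (dedekindZeta_residue K : ℂ) = (legendreChar p ℂ).LFunction 1 :=
    dedekindZeta_residue_eq_LFunction_one (legendreChar_ne_one (by omega) ℂ)
      fun _ => dedekindZeta_eq_riemannZeta_mul_LSeries b hp4 hm hb0 hb1
  have hL := congrArg Complex.re (LFunction_legendreChar_one_mul_sqrt hp4)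
  have hclass := dedekindZeta_residue_mul_sqrt_abs_discr hrank hε
  rw [hdiscr, Int.cast_natCast, Nat.abs_cast] at hclass
  rw [← hresidue, ← Complex.ofReal_mul, Complex.ofReal_re, hclass, Complex.neg_re,
    Complex.re_sum] at hL
  simp only [legendreChar_eq_ofReal, Complex.re_ofReal_mul, Complex.log_re] at hL
  simp only [logNormOneSub, hL, neg_neg]

end ClassNumberFormula

/-! ### Products over the half system `1, …, (p - 1) / 2` -/

section CyclotomicLogarithms

variable {N : ℕ} [NeZero N]

lemma one_sub_stdAddChar_ne_zero {x : ZMod N} (hx : x ≠ 0) : (1 : ℂ) - ZMod.stdAddChar x ≠ 0 := by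
  rw [sub_ne_zero, ← AddChar.map_zero_eq_one (ZMod.stdAddChar (N := N))]
  exact (ZMod.injective_stdAddChar.ne hx).symm

lemma one_sub_mul_one_add_stdAddChar (x : ZMod N) :
    (1 - ZMod.stdAddChar x) * (1 + ZMod.stdAddChar x) = (1 - ZMod.stdAddChar (2 * x) : ℂ) := by
  rw [two_mul, AddChar.map_add_eq_mul]
  ring

lemma one_add_stdAddChar_ne_zero {x : ZMod N} (hx : 2 * x ≠ 0) :
    (1 : ℂ) + ZMod.stdAddChar x ≠ 0 :=
  right_ne_zero_of_mul (one_sub_mul_one_add_stdAddChar x ▸ one_sub_stdAddChar_ne_zero hx)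

lemma logNormOneSub_zero : logNormOneSub (0 : ZMod N) = 0 := by
  simp [logNormOneSub]

lemma logNormOneSub_neg (x : ZMod N) : logNormOneSub (-x) = logNormOneSub x := by
  rw [logNormOneSub, logNormOneSub, AddChar.map_neg_eq_conj, ← Complex.norm_conj, map_sub, map_one,
    Complex.conj_conj]

lemma log_norm_one_add_stdAddChar {x : ZMod N} (hx : 2 * x ≠ 0) :
    Real.log ‖(1 : ℂ) + ZMod.stdAddChar x‖ = logNormOneSub (2 * x) - logNormOneSub x := by
  have hsub := one_sub_stdAddChar_ne_zero (right_ne_zero_of_mul hx)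
  rw [logNormOneSub, logNormOneSub, ← one_sub_mul_one_add_stdAddChar, norm_mul,
    Real.log_mul (norm_ne_zero_iff.2 hsub) (norm_ne_zero_iff.2 (one_add_stdAddChar_ne_zero hx)),
    add_sub_cancel_left]

variable {x : ZMod N} {a : ℝ}

lemma one_add_sign_mul_stdAddChar_ne_zero (hx : 2 * x ≠ 0) (ha : a = 1 ∨ a = -1) :
    1 + (a : ℂ) * ZMod.stdAddChar x ≠ 0 := by
  rcases ha with rfl | rfl
  · simpa using one_add_stdAddChar_ne_zero hx
  · simpa [← sub_eq_add_neg] using one_sub_stdAddChar_ne_zero (right_ne_zero_of_mul hx)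

lemma two_mul_log_norm_one_add_sign_mul_stdAddChar (hx : 2 * x ≠ 0) (ha : a = 1 ∨ a = -1) :
    2 * Real.log ‖1 + (a : ℂ) * ZMod.stdAddChar x‖ =
      logNormOneSub (2 * x) + a * logNormOneSub (2 * x) - 2 * (a * logNormOneSub x) := by
  rcases ha with rfl | rfl
  · rw [Complex.ofReal_one, one_mul, log_norm_one_add_stdAddChar hx]
    ring
  · rw [Complex.ofReal_neg, Complex.ofReal_one, neg_one_mul, ← sub_eq_add_neg, ← logNormOneSub]
    ring

end CyclotomicLogarithms

section HalfSystem

lemma sum_zmod_eq_two_mul_sum_Icc {N : ℕ} [NeZero N] (hN : Odd N) {R : Type*}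
    [NonAssocSemiring R] {g : ZMod N → R} (hzero : g 0 = 0) (heven : ∀ x, g (-x) = g x) :
    ∑ x, g x = 2 * ∑ j ∈ Icc 1 ((N - 1) / 2), g j := by
  obtain ⟨n, hn⟩ := hN
  have hreflect : ∑ k ∈ range n, g (n + k + 1 : ℕ) = ∑ k ∈ range n, g (k + 1 : ℕ) := by
    rw [← sum_range_reflect]
    refine sum_congr rfl fun k hk => ?_
    have hsum : n + (n - 1 - k) + 1 + (k + 1) = N := by
      have := mem_range.1 hk
      omega
    rw [← heven, neg_eq_of_add_eq_zero_right]
    rw [← Nat.cast_add, hsum, ZMod.natCast_self]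
  rw [sum_zmod_eq_sum_range, show (N - 1) / 2 = n by omega, show range N = range (n + n + 1) by
    rw [hn, two_mul], sum_range_succ', Nat.cast_zero, hzero, add_zero, sum_range_add, hreflect,
    ← two_mul, range_eq_Ico, sum_Ico_add' (fun j : ℕ => g j), zero_add,
    Ico_add_one_right_eq_Icc]

lemma two_mul_natCast_ne_zero_of_mem_Icc {N j : ℕ} (hj : j ∈ Icc 1 ((N - 1) / 2)) :
    2 * (j : ZMod N) ≠ 0 := by
  obtain ⟨hj1, hjN⟩ := mem_Icc.1 hj
  rw [Ne, ← Nat.cast_two, ← Nat.cast_mul, ZMod.natCast_eq_zero_iff]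
  exact fun h => absurd (Nat.le_of_dvd (by omega) h) (by omega)

lemma sum_mulChar_mul_comp_mul {M R : Type*} [CommMonoid M] [Fintype M] [CommSemiring R]
    (χ : MulChar M R) (u : Mˣ) (g : M → R) :
    χ u * ∑ x, χ x * g (u * x) = ∑ x, χ x * g x := by
  rw [mul_sum]
  refine Fintype.sum_equiv (Units.mulLeft u) _ _ fun x => ?_
  rw [Units.mulLeft_apply, map_mul, mul_assoc]

lemma prod_Icc_pow {M : Type*} [CommMonoid M] (z : M) (n : ℕ) :
    ∏ j ∈ Icc 1 n, z ^ j = z ^ (n * (n + 1) / 2) := by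
  rw [prod_pow_eq_pow_sum, ← Ico_add_one_right_eq_Icc, ← zero_add (∑ j ∈ Ico 1 (n + 1), j),
    ← sum_eq_sum_Ico_succ_bot n.succ_pos (fun j => j), ← range_eq_Ico, sum_range_id,
    Nat.succ_sub_one, mul_comm]

lemma one_add_sq_eq_mul_norm_sq {z : ℂ} (hz : ‖z‖ = 1) :
    (1 + z) ^ 2 = z * (‖1 + z‖ ^ 2 : ℝ) := by
  have hconj : z * conj z = 1 := by rw [Complex.mul_conj', hz, Complex.ofReal_one, one_pow]
  rw [Complex.ofReal_pow, ← Complex.mul_conj', map_add, map_one]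
  linear_combination -(1 + z) * hconj

lemma prod_sign_eq_I_pow_card {ι : Type*} {s : Finset ι} {a : ι → ℝ}
    (ha : ∀ i ∈ s, a i = 1 ∨ a i = -1) (hsum : ∑ i ∈ s, a i = 0) :
    ∏ i ∈ s, (a i : ℂ) = Complex.I ^ #s := by
  -- Since the signs sum to `0`, the phases `e^(-iπa/2)` multiply to `1`.
  have hphase : ∀ i ∈ s, (a i : ℂ) = Complex.I * Complex.exp (-(π / 2 * Complex.I) * a i) := by
    intro i hi
    rcases ha i hi with h | h <;>
      simp [h, Complex.exp_neg, Complex.exp_pi_div_two_mul_I]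
  rw [prod_congr rfl hphase, prod_mul_distrib, prod_const, ← Complex.exp_sum, ← mul_sum,
    ← Complex.ofReal_sum, hsum, Complex.ofReal_zero, mul_zero, Complex.exp_zero, mul_one]

lemma exp_zpow_sub_exp_zpow_neg {N : ℕ} [NeZero N] {j : ℕ} (hj : j ≤ N) :
    Complex.exp (π * Complex.I / N) ^ (j : ℤ) - Complex.exp (π * Complex.I / N) ^ (-(j : ℤ)) =
      Complex.I * ‖1 - (ZMod.stdAddChar (j : ZMod N) : ℂ)‖ := by
  have hN : (0 : ℝ) < N := Nat.cast_pos.2 (NeZero.pos N)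
  have hsin : 0 ≤ Real.sin (π * j / N) := by
    refine Real.sin_nonneg_of_nonneg_of_le_pi (by positivity) ?_
    rw [div_le_iff₀ hN]
    exact mul_le_mul_of_nonneg_left (Nat.cast_le.2 hj) Real.pi_nonneg
  have hnorm : ‖1 - (ZMod.stdAddChar (j : ZMod N) : ℂ)‖ = 2 * Real.sin (π * j / N) := by
    have hchar : (ZMod.stdAddChar (j : ZMod N) : ℂ) =
        Complex.exp (Complex.I * (2 * (π * j / N) : ℝ)) := by
      rw [← Int.cast_natCast, ZMod.stdAddChar_coe]
      push_cast
      ring_nf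
    rw [hchar, norm_sub_rev, Complex.norm_exp_I_mul_ofReal_sub_one,
      mul_div_cancel_left₀ _ two_ne_zero, Real.norm_of_nonneg (by positivity)]
  rw [hnorm, ← Complex.exp_int_mul, ← Complex.exp_int_mul]
  have hneg : ((-(j : ℤ) : ℤ) : ℂ) * (π * Complex.I / N) = -(π * j / N : ℝ) * Complex.I := by
    push_cast
    ring
  have hpos : ((j : ℤ) : ℂ) * (π * Complex.I / N) = (π * j / N : ℝ) * Complex.I := by
    push_cast
    ring
  rw [hneg, hpos, Complex.ofReal_mul, Complex.ofReal_sin, Complex.sin, Complex.ofReal_ofNat]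
  linear_combination (Complex.exp ((π * j / N : ℝ) * Complex.I) -
    Complex.exp (-(π * j / N : ℝ) * Complex.I)) * Complex.I_mul_I

lemma prod_Icc_exp_zpow_sub_exp_zpow_neg {N : ℕ} [NeZero N] :
    ∏ j ∈ Icc 1 ((N - 1) / 2), (Complex.exp (π * Complex.I / N) ^ (j : ℤ) -
        Complex.exp (π * Complex.I / N) ^ (-(j : ℤ))) =
      Complex.I ^ ((N - 1) / 2) *
        (∏ j ∈ Icc 1 ((N - 1) / 2), ‖1 - (ZMod.stdAddChar (j : ZMod N) : ℂ)‖ : ℝ) := by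
  have hle : ∀ j ∈ Icc 1 ((N - 1) / 2), j ≤ N := fun j hj => by have := mem_Icc.1 hj; omega
  rw [prod_congr rfl fun j hj => exp_zpow_sub_exp_zpow_neg (hle j hj), prod_mul_distrib,
    prod_const, Nat.card_Icc, Nat.add_sub_cancel, Complex.ofReal_prod]

end HalfSystem

section LegendreHalfSystem

variable {p : ℕ} [Fact p.Prime]

lemma legendreChar_eq_one_or_neg_one (R : Type*) [CommRing R] {x : ZMod p} (hx : x ≠ 0) :
    legendreChar p R x = 1 ∨ legendreChar p R x = -1 := by
  refine (quadraticChar_dichotomy hx).imp (fun h => ?_) fun h => ?_ <;> simp [legendreChar, h]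

lemma legendreChar_neg (hp4 : p % 4 = 1) (R : Type*) [CommRing R] (x : ZMod p) :
    legendreChar p R (-x) = legendreChar p R x := by
  have hhalf : Even (p / 2) := Nat.even_iff.2 (by omega)
  rw [← neg_one_mul, map_mul, legendreChar_neg_one (by omega), hhalf.neg_one_pow, one_mul]

lemma sum_Icc_legendreChar (hp4 : p % 4 = 1) :
    ∑ j ∈ Icc 1 ((p - 1) / 2), legendreChar p ℝ j = 0 := by
  have hp2 : p ≠ 2 := by omega
  have hχ : legendreChar p ℝ ≠ 1 := legendreChar_ne_one hp2 ℝ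
  have hsum := MulChar.sum_eq_zero_of_ne_one hχ
  rw [sum_zmod_eq_two_mul_sum_Icc (Fact.out (p := p.Prime).odd_of_ne_two hp2)
    (MulChar.map_zero _) (legendreChar_neg hp4 ℝ)] at hsum
  exact (mul_eq_zero.1 hsum).resolve_left two_ne_zero

lemma prod_Icc_legendreChar (hp4 : p % 4 = 1) :
    ∏ j ∈ Icc 1 ((p - 1) / 2), (legendreChar p ℝ j : ℂ) = Complex.I ^ ((p - 1) / 2) := by
  rw [prod_sign_eq_I_pow_card (fun j hj => legendreChar_eq_one_or_neg_one ℝ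
    (right_ne_zero_of_mul (two_mul_natCast_ne_zero_of_mem_Icc hj))) (sum_Icc_legendreChar hp4),
    Nat.card_Icc, Nat.add_sub_cancel]

lemma sum_legendreChar_mul_comp_two_mul (hp2 : p ≠ 2) (g : ZMod p → ℝ) :
    ∑ x, legendreChar p ℝ x * g (2 * x) =
      legendreSym p 2 * ∑ x, legendreChar p ℝ x * g x := by
  have htwo : (2 : ZMod p) ≠ 0 := Ring.two_ne_zero (by rwa [ZMod.ringChar_zmod_n])
  have hsq : (legendreSym p 2 : ℝ) ^ 2 = 1 := mod_cast legendreSym.sq_one p (by simpa using htwo)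
  have hchar : legendreChar p ℝ 2 = legendreSym p 2 := by
    simpa using legendreChar_intCast (p := p) ℝ 2
  rw [← sum_mulChar_mul_comp_mul (legendreChar p ℝ) (Units.mk0 2 htwo) g, Units.val_mk0, hchar,
    ← mul_assoc, ← sq, hsq, one_mul]

lemma sum_Icc_two_mul_log_norm_one_add_legendreChar (hp4 : p % 4 = 1) :
    ∑ j ∈ Icc 1 ((p - 1) / 2),
        2 * Real.log ‖1 + (legendreChar p ℝ j : ℂ) * ZMod.stdAddChar (j : ZMod p)‖ =
      (legendreSym p 2 - 2) * ((∑ x, legendreChar p ℝ x * logNormOneSub x) / 2) +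
        ∑ j ∈ Icc 1 ((p - 1) / 2), logNormOneSub (j : ZMod p) := by
  have hp2 : p ≠ 2 := by omega
  have hodd : Odd p := (Fact.out : p.Prime).odd_of_ne_two hp2
  let g : ZMod p → ℝ := fun x => logNormOneSub (2 * x) +
    legendreChar p ℝ x * logNormOneSub (2 * x) - 2 * (legendreChar p ℝ x * logNormOneSub x)
  have hterm : ∀ j ∈ Icc 1 ((p - 1) / 2),
      2 * Real.log ‖1 + (legendreChar p ℝ j : ℂ) * ZMod.stdAddChar (j : ZMod p)‖ = g j := by
    intro j hj
    have hj2 := two_mul_natCast_ne_zero_of_mem_Icc hj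
    exact two_mul_log_norm_one_add_sign_mul_stdAddChar hj2
      (legendreChar_eq_one_or_neg_one ℝ (right_ne_zero_of_mul hj2))
  have hg := sum_zmod_eq_two_mul_sum_Icc hodd (g := g) (by simp [g, logNormOneSub_zero])
    (fun x => by simp only [g, mul_neg, logNormOneSub_neg, legendreChar_neg hp4])
  have hlog := sum_zmod_eq_two_mul_sum_Icc hodd logNormOneSub_zero (logNormOneSub_neg (N := p))
  have hdouble : ∑ x : ZMod p, logNormOneSub (2 * x) = ∑ x : ZMod p, logNormOneSub x :=
    Equiv.sum_comp (Equiv.mulLeft₀ (2 : ZMod p) (Ring.two_ne_zero (by rwa [ZMod.ringChar_zmod_n])))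
      logNormOneSub
  rw [sum_congr rfl hterm]
  simp only [g, sum_sub_distrib, sum_add_distrib, hdouble,
    sum_legendreChar_mul_comp_two_mul hp2, ← mul_sum] at hg ⊢
  linarith

lemma prod_Icc_norm_one_add_legendreChar_sq (hp4 : p % 4 = 1) {E : ℝ} (hE : 0 < E) {h : ℕ}
    (hsum : ∑ x, legendreChar p ℝ x * logNormOneSub x = -(2 * h * Real.log E)) :
    ∏ j ∈ Icc 1 ((p - 1) / 2),
        ‖1 + (legendreChar p ℝ j : ℂ) * ZMod.stdAddChar (j : ZMod p)‖ ^ 2 =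
      E ^ ((2 - legendreSym p 2) * (h : ℤ)) *
        ∏ j ∈ Icc 1 ((p - 1) / 2), ‖1 - (ZMod.stdAddChar (j : ZMod p) : ℂ)‖ := by
  have hadd : ∀ j ∈ Icc 1 ((p - 1) / 2),
      0 < ‖1 + (legendreChar p ℝ j : ℂ) * ZMod.stdAddChar (j : ZMod p)‖ := by
    intro j hj
    have hj2 := two_mul_natCast_ne_zero_of_mem_Icc hj
    exact norm_pos_iff.2 (one_add_sign_mul_stdAddChar_ne_zero hj2
      (legendreChar_eq_one_or_neg_one ℝ (right_ne_zero_of_mul hj2)))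
  have hsub : ∀ j ∈ Icc 1 ((p - 1) / 2), 0 < ‖1 - (ZMod.stdAddChar (j : ZMod p) : ℂ)‖ :=
    fun j hj => norm_pos_iff.2 (one_sub_stdAddChar_ne_zero
      (right_ne_zero_of_mul (two_mul_natCast_ne_zero_of_mem_Icc hj)))
  have hE' : 0 < E ^ ((2 - legendreSym p 2) * (h : ℤ)) := zpow_pos hE _
  refine Real.log_injOn_pos (prod_pos fun j hj => pow_pos (hadd j hj) 2)
    (mul_pos hE' (prod_pos hsub)) ?_
  rw [Real.log_mul hE'.ne' (prod_pos hsub).ne', Real.log_zpow,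
    Real.log_prod fun j hj => (pow_pos (hadd j hj) 2).ne',
    Real.log_prod fun j hj => (hsub j hj).ne']
  simp only [Real.log_pow, Nat.cast_ofNat]
  rw [sum_Icc_two_mul_log_norm_one_add_legendreChar hp4, hsum]
  simp only [logNormOneSub]
  push_cast
  ring

lemma prod_Icc_one_add_legendreChar_sq (hp4 : p % 4 = 1) :
    ∏ j ∈ Icc 1 ((p - 1) / 2), (1 + (legendreChar p ℝ j : ℂ) * ZMod.stdAddChar (j : ZMod p)) ^ 2 =
      Complex.I ^ ((p - 1) / 2) *
        Complex.exp (2 * π * Complex.I / p) ^ ((p - 1) / 2 * ((p - 1) / 2 + 1) / 2) *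
        (∏ j ∈ Icc 1 ((p - 1) / 2),
          ‖1 + (legendreChar p ℝ j : ℂ) * ZMod.stdAddChar (j : ZMod p)‖ ^ 2 : ℝ) := by
  have hterm : ∀ j ∈ Icc 1 ((p - 1) / 2),
      (1 + (legendreChar p ℝ j : ℂ) * ZMod.stdAddChar (j : ZMod p)) ^ 2 =
        legendreChar p ℝ j * ZMod.stdAddChar (j : ZMod p) *
          (‖1 + (legendreChar p ℝ j : ℂ) * ZMod.stdAddChar (j : ZMod p)‖ ^ 2 : ℝ) := by
    intro j hj
    refine one_add_sq_eq_mul_norm_sq ?_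
    rcases legendreChar_eq_one_or_neg_one ℝ
      (right_ne_zero_of_mul (two_mul_natCast_ne_zero_of_mem_Icc hj)) with h | h <;> simp [h]
  rw [prod_congr rfl hterm, prod_mul_distrib, prod_mul_distrib, prod_Icc_legendreChar hp4,
    Complex.ofReal_prod, prod_congr rfl fun j _ => stdAddChar_natCast j, prod_Icc_pow]

end LegendreHalfSystem

/-- ∏_{j=1}^{n}(1+(j/p)ζ^j)² = ζ^{n(n+1)/2} ε^{(2-(2/p))h} ∏_{j=1}^{n}(ζ^{j/2}-ζ^{-j/2}). -/
theorem prod_one_add_chi_zeta_sq (p : ℕ) [Fact (Nat.Prime p)] (hp : p % 4 = 1)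
    (K : Type) [Field K] [NumberField K]
    (hdeg : Module.finrank ℚ K = 2)
    (hsq : ∃ x : K, x ^ 2 = (p : K))
    (f : K →+* ℝ)
    (ε : (NumberField.RingOfIntegers K)ˣ)
    (hε1 : 1 < f (algebraMap (NumberField.RingOfIntegers K) K (ε : NumberField.RingOfIntegers K)))
    (hεmin : ∀ u : (NumberField.RingOfIntegers K)ˣ,
      1 < f (algebraMap (NumberField.RingOfIntegers K) K (u : NumberField.RingOfIntegers K)) →
      f (algebraMap (NumberField.RingOfIntegers K) K (ε : NumberField.RingOfIntegers K)) ≤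
        f (algebraMap (NumberField.RingOfIntegers K) K (u : NumberField.RingOfIntegers K))) :
    ∏ j ∈ Finset.Icc 1 ((p - 1) / 2),
        (1 + (legendreSym p (j : ℤ) : ℂ) *
          Complex.exp (2 * Real.pi * Complex.I / p) ^ j) ^ 2 =
      Complex.exp (2 * Real.pi * Complex.I / p) ^
          (((p - 1) / 2) * ((p - 1) / 2 + 1) / 2) *
        ((f (algebraMap (NumberField.RingOfIntegers K) K (ε : NumberField.RingOfIntegers K)) : ℂ) ^
          ((2 - legendreSym p 2) * (NumberField.classNumber K : ℤ))) *
        ∏ j ∈ Finset.Icc 1 ((p - 1) / 2),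
          (Complex.exp (Real.pi * Complex.I / p) ^ (j : ℤ) -
            Complex.exp (Real.pi * Complex.I / p) ^ (-(j : ℤ))) := by
  have hε : IsFundamentalUnit f ε := ⟨hε1, hεmin⟩
  have hterm (j : ℕ) : (1 + (legendreSym p j : ℂ) * Complex.exp (2 * π * Complex.I / p) ^ j) ^ 2 =
      (1 + (legendreChar p ℝ j : ℂ) * ZMod.stdAddChar (j : ZMod p)) ^ 2 := by
    rw [stdAddChar_natCast, ← legendreChar_intCast, Int.cast_natCast, legendreChar_eq_ofReal]
  have hnorm := prod_Icc_norm_one_add_legendreChar_sq hp (zero_lt_one.trans hε.1)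
    (sum_legendreChar_mul_logNormOneSub hp hdeg hsq hε)
  rw [prod_congr rfl fun j _ => hterm j, prod_Icc_one_add_legendreChar_sq hp, hnorm,
    prod_Icc_exp_zpow_sub_exp_zpow_neg, Complex.ofReal_mul, Complex.ofReal_zpow]
  change _ * (((unitEmbedding f ε : ℝ) : ℂ) ^ _ * _) = _ * ((unitEmbedding f ε : ℝ) : ℂ) ^ _ * _
  ring
end

section
/- Let $p\equiv 1 \pmod 4$ be prime and $n=(p-1)/2$. Let $C$ be the $(n+1)\times(n+1)$ matrix with entries $C_{ij} = (\tfrac{j-i}{p})$ for $0\le i,j\le n$, where $(\tfrac{\cdot}{p})$ is the Legendre symbol (with $(\tfrac{0}{p})=0$). Then $\det C$ is a negative even integer. -/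
/-!
Let `χ` be the quadratic character modulo `p = 2 n + 1`, let `φ` be a primitive additive character
with Gauss sum `√p`, and for `ε = ±1` let `T` consist of `0` and of all `a` with `χ a = ε`. Up to
a diagonal shift by `p`, the matrix `1 + ε χ(2) √p χ(k - l)` is `2 Vᵀ W`, where `V` and `W` are the
Vandermonde matrices of `(φ a) ^ 2` and `(φ a)⁻¹ ^ 2` for `a ∈ T`. Since
`det (A B - c) = det (B A - c)`, the factors may be swapped; summing geometric series then turns
the matrix into the Cauchy-like matrix `2 x i / (x i + x j)`, whose determinant is, up to sign, the
product of `|tan|` of half the angles between the points `φ a`, `a ∈ T`.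

The identity `det (M + J) + det (M - J) = 2 det M` for the all-ones matrix `J` therefore expresses
`2 (√p) ^ (n + 1) det C` as the difference of the tangent products for `ε = 1` and `ε = -1`. The
difference of their logarithms is
`(2 - χ(2)) ∑ d, χ(d) log |1 - φ d| = -(2 - χ(2)) √p L(1, χ) < 0`.

For the parity, each row of `C` has exactly `n` odd entries, and `n` is even, so the rows of `C`
sum to zero modulo `2`.
-/

open Matrix in
theorem det_add_vecMulVec_add_det_sub_vecMulVec {m R : Type*} [Fintype m] [DecidableEq m]
    [CommRing R] (M : Matrix m m R) (u v : m → R) :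
    (M + vecMulVec u v).det + (M - vecMulVec u v).det = 2 * M.det := by
  let bordered (w : m → R) (c : R) : Matrix (m ⊕ Unit) (m ⊕ Unit) R :=
    fromBlocks M (replicateCol Unit u) (replicateRow Unit w) (c • 1)
  have bordered_eq (w : m → R) (c : R) :
      bordered w c = (bordered 0 0).updateRow (Sum.inr ()) (Sum.elim w fun _ ↦ c) := by
    ext (i | i) (j | j) <;> simp [bordered]
  have det_sub (w : m → R) : (M - vecMulVec u w).det = (bordered w 1).det := by
    simp only [bordered, one_smul, det_fromBlocks_one₂₂, vecMulVec_eq Unit]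
  calc (M + vecMulVec u v).det + (M - vecMulVec u v).det
      = (bordered (-v) 1).det + (bordered v 1).det := by
        rw [← det_sub, ← det_sub, vecMulVec_neg, sub_neg_eq_add]
    _ = (bordered 0 2).det := by
        rw [bordered_eq (-v), bordered_eq v, bordered_eq 0 2, ← det_updateRow_add]
        congr 2
        ext (j | j) <;> simp [one_add_one_eq_two]
    _ = 2 * M.det := by
        simp only [bordered, replicateRow_zero, det_fromBlocks_zero₂₁, det_smul, det_one]
        simp [mul_comm]

open Matrix in
theorem dvd_det_of_forall_dvd_row_sum {m R : Type*} [Fintype m] [DecidableEq m] [Nonempty m]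
    [CommRing R] {k : R} {M : Matrix m m R} (h : ∀ i, k ∣ ∑ j, M i j) : k ∣ M.det := by
  have adjugate_mulVec : M.adjugate *ᵥ (M *ᵥ 1) = M.det • (1 : m → R) := by
    rw [mulVec_mulVec, adjugate_mul, smul_mulVec, one_mulVec]
  obtain ⟨i⟩ := ‹Nonempty m›
  rw [show M.det = (M.adjugate *ᵥ (M *ᵥ 1)) i by simp [adjugate_mulVec], mulVec, dotProduct]
  exact Finset.dvd_sum fun j _ ↦ Dvd.dvd.mul_left (by simpa [mulVec, dotProduct] using h j) _

section Cauchy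

open Finset Matrix Polynomial

variable {K : Type*} [Field K] {m : ℕ}

theorem vandermonde_mul_of_coeff {R : Type*} [CommRing R] (v : Fin m → R) (Q : Fin m → R[X])
    (hQ : ∀ j, (Q j).natDegree < m) :
    vandermonde v * of (fun k j : Fin m ↦ (Q j).coeff k) = of fun i j ↦ (Q j).eval (v i) := by
  ext i j
  rw [mul_apply, of_apply, eval_eq_sum_range' (hQ j), sum_range]
  simp [vandermonde_apply, mul_comm]

theorem natDegree_prod_compl_X_add_C_lt {R : Type*} [CommRing R] (y : Fin m → R) (j : Fin m) :
    (∏ k ∈ {j}ᶜ, (X + C (y k))).natDegree < m := by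
  calc (∏ k ∈ {j}ᶜ, (X + C (y k))).natDegree
      ≤ ∑ _k ∈ ({j}ᶜ : Finset (Fin m)), 1 :=
        (natDegree_prod_le _ _).trans (sum_le_sum fun k _ ↦ by compute_degree)
    _ = m - 1 := by simp [card_compl]
    _ < m := Nat.sub_lt j.pos one_pos

theorem prod_compl_sub_eq_det_vandermonde_mul {R : Type*} [CommRing R] (y : Fin m → R) :
    ∏ i, ∏ k ∈ {i}ᶜ, (y k - y i) = (vandermonde (-y)).det * (vandermonde y).det := by
  rw [← prod_prod_Ioi_mul_eq_prod_prod_off_diag fun k i ↦ y k - y i, det_vandermonde,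
    det_vandermonde, ← prod_mul_distrib]
  refine prod_congr rfl fun i _ ↦ ?_
  rw [← prod_mul_distrib]
  exact prod_congr rfl fun j _ ↦ by simp only [Pi.neg_apply]; ring

theorem det_inv_add_mul_prod (x y : Fin m → K) (hxy : ∀ i j, x i + y j ≠ 0) :
    (of fun i j ↦ (x i + y j)⁻¹).det * ∏ i, ∏ j, (x i + y j) =
      (vandermonde x).det * (vandermonde y).det := by
  by_cases hy : Function.Injective y
  case neg =>
    obtain ⟨j, k, hjk, hne⟩ := Function.not_injective_iff.mp hy
    rw [det_zero_of_column_eq hne (by simp [hjk]),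
      det_vandermonde_eq_zero_iff.mpr ⟨j, k, hjk, hne⟩, zero_mul, mul_zero]
  -- Evaluate `∏ k ≠ j, (X + y k)` at the points `x i` and `-y i`.
  set Q : Fin m → K[X] := fun j ↦ ∏ k ∈ {j}ᶜ, (X + C (y k))
  have hQ (j) : (Q j).natDegree < m := natDegree_prod_compl_X_add_C_lt y j
  have eval_Q (j a) : (Q j).eval a = ∏ k ∈ {j}ᶜ, (a + y k) := by simp [Q, eval_prod]
  have eval_at_x : (of fun i j ↦ (Q j).eval (x i)) =
      of fun i j ↦ (∏ k, (x i + y k)) * (of fun i j ↦ (x i + y j)⁻¹) i j := by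
    ext i j
    simp only [of_apply, eval_Q, Fintype.prod_eq_mul_prod_compl j]
    field_simp [hxy i j]
  have eval_at_neg_y : (of fun i j ↦ (Q j).eval ((-y) i)) =
      diagonal fun i ↦ ∏ k ∈ {i}ᶜ, (y k - y i) := by
    ext i j
    rw [of_apply, eval_Q]
    obtain rfl | hij := eq_or_ne i j
    · simp [neg_add_eq_sub]
    · rw [diagonal_apply_ne _ hij]
      exact prod_eq_zero (i := i) (by simpa using hij) (by simp)
  have det_x := congrArg det (vandermonde_mul_of_coeff x Q hQ)
  have det_y := congrArg det (vandermonde_mul_of_coeff (-y) Q hQ)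
  rw [det_mul, eval_at_x, det_mul_column] at det_x
  rw [det_mul, eval_at_neg_y, det_diagonal, prod_compl_sub_eq_det_vandermonde_mul] at det_y
  have det_vandermonde_neg_ne : (vandermonde (-y)).det ≠ 0 :=
    det_vandermonde_ne_zero_iff.mpr (neg_injective.comp hy)
  rw [mul_comm _ (∏ i, _), ← det_x, mul_left_cancel₀ det_vandermonde_neg_ne det_y]

theorem det_two_mul_div_add (x : Fin m → K) (hx : ∀ i j, x i + x j ≠ 0) :
    (of fun i j ↦ 2 * x i / (x i + x j)).det =
      ∏ i, ∏ j ∈ Ioi i, ((x j - x i) / (x j + x i)) ^ 2 := by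
  have prod_add : ∏ i, ∏ j, (x i + x j) =
      (∏ i, 2 * x i) * ∏ i, ∏ j ∈ Ioi i, (x j + x i) ^ 2 := by
    calc ∏ i, ∏ j, (x i + x j)
        = (∏ i, 2 * x i) * ∏ i, ∏ j ∈ {i}ᶜ, (x j + x i) := by
          rw [← prod_mul_distrib]
          refine prod_congr rfl fun i _ ↦ ?_
          rw [Fintype.prod_eq_mul_prod_compl i, two_mul]
          simp only [add_comm]
      _ = _ := by
          rw [← prod_prod_Ioi_mul_eq_prod_prod_off_diag fun j i ↦ x j + x i]
          simp only [sq, add_comm]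
  have prod_add_ne_zero : ∏ i, ∏ j ∈ Ioi i, (x j + x i) ^ 2 ≠ 0 :=
    prod_ne_zero_iff.mpr fun i _ ↦ prod_ne_zero_iff.mpr fun j _ ↦ pow_ne_zero 2 (hx j i)
  have cauchy := det_inv_add_mul_prod x x hx
  rw [prod_add, det_vandermonde] at cauchy
  calc (of fun i j ↦ 2 * x i / (x i + x j)).det
      = (∏ i, 2 * x i) * (of fun i j ↦ (x i + x j)⁻¹).det := by
        simp only [div_eq_mul_inv]
        exact det_mul_column _ _
    _ = (∏ i, ∏ j ∈ Ioi i, (x j - x i) ^ 2) / ∏ i, ∏ j ∈ Ioi i, (x j + x i) ^ 2 := by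
        rw [eq_div_iff prod_add_ne_zero]
        simp only [prod_pow] at cauchy ⊢
        linear_combination cauchy
    _ = _ := by simp only [div_pow, prod_div_distrib]

end Cauchy

section OddRootsOfUnity

open Finset Matrix

variable {K : Type*} [Field K] [NeZero (2 : K)] {n : ℕ}

theorem add_ne_zero_of_odd_pow_eq_one {k : ℕ} (hk : Odd k) {x y : K} (hx : x ^ k = 1)
    (hy : y ^ k = 1) : x + y ≠ 0 := by
  intro hxy
  rw [eq_neg_of_add_eq_zero_left hxy, hk.neg_pow, hy] at hx
  exact two_ne_zero (α := K) (by linear_combination -hx)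

theorem geom_sum_div_sq_of_pow_eq_one {x y : K} (hx : x ^ (2 * n + 1) = 1)
    (hy : y ^ (2 * n + 1) = 1) (hxy : x ≠ y) :
    ∑ k ∈ range (n + 1), ((y / x) ^ 2) ^ k = x / (x + y) := by
  have x_ne_zero : x ≠ 0 := fun h ↦ by simp [h] at hx
  have ratio_pow : (y / x) ^ (2 * n + 1) = 1 := by rw [div_pow, hx, hy, div_one]
  have ratio_ne_one : y / x - 1 ≠ 0 := by
    rw [sub_ne_zero, Ne, div_eq_one_iff_eq x_ne_zero]
    exact hxy.symm
  have geom : (∑ k ∈ range (n + 1), ((y / x) ^ 2) ^ k) * (1 + y / x) = 1 := by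
    apply mul_right_cancel₀ ratio_ne_one
    linear_combination geom_sum_mul ((y / x) ^ 2) (n + 1) + y / x * ratio_pow
  rw [eq_div_iff (add_ne_zero_of_odd_pow_eq_one ⟨n, rfl⟩ hx hy)]
  calc _ = (∑ k ∈ range (n + 1), ((y / x) ^ 2) ^ k) * (1 + y / x) * x := by field_simp
    _ = x := by rw [geom, one_mul]

theorem det_mul_sub_scalar_comm {m R : Type*} [Fintype m] [DecidableEq m] [CommRing R]
    (A B : Matrix m m R) (c : R) : (A * B - scalar m c).det = (B * A - scalar m c).det := by
  rw [← neg_sub, det_neg, ← eval_charpoly, charpoly_mul_comm, eval_charpoly, ← det_neg, neg_sub]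

theorem det_two_mul_sum_pow_mul_inv_pow_sub (x : Fin (n + 1) → K) (hx : Function.Injective x)
    (hpow : ∀ i, x i ^ (2 * n + 1) = 1) :
    (of fun k l : Fin (n + 1) ↦ 2 * ∑ i, (x i ^ 2) ^ (k : ℕ) * ((x i ^ 2)⁻¹) ^ (l : ℕ) -
        (if k = l then 2 * n + 1 else 0 : K)).det =
      ∏ i, ∏ j ∈ Ioi i, ((x j - x i) / (x j + x i)) ^ 2 := by
  have x_ne_zero (i) : x i ≠ 0 := fun h ↦ by simpa [h] using hpow i
  have add_ne (i j) : x i + x j ≠ 0 :=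
    add_ne_zero_of_odd_pow_eq_one ⟨n, rfl⟩ (hpow i) (hpow j)
  let V := vandermonde fun i ↦ x i ^ 2
  let W := vandermonde fun i ↦ (x i ^ 2)⁻¹
  calc _ = (((2 : K) • Vᵀ) * W - scalar (Fin (n + 1)) (2 * n + 1 : K)).det := by
        congr 1
        ext k l
        simp [V, W, mul_apply, diagonal_apply, mul_sum]
    _ = (W * ((2 : K) • Vᵀ) - scalar (Fin (n + 1)) (2 * n + 1 : K)).det :=
        det_mul_sub_scalar_comm _ _ _
    _ = (of fun i j ↦ 2 * x i / (x i + x j)).det := by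
        congr 1
        ext i j
        have entry : (W * ((2 : K) • Vᵀ) - scalar (Fin (n + 1)) (2 * n + 1 : K)) i j =
            2 * (∑ k : Fin (n + 1), ((x j / x i) ^ 2) ^ (k : ℕ)) -
              if i = j then (2 * n + 1 : K) else 0 := by
          simp [V, W, vandermonde_mul_vandermonde_transpose, diagonal_apply, div_eq_mul_inv,
            mul_pow, mul_comm]
        rw [entry, of_apply]
        obtain rfl | hij := eq_or_ne i j
        · have two_x_ne_zero := mul_ne_zero (two_ne_zero' K) (x_ne_zero i)
          simp only [div_self (x_ne_zero i), ← two_mul, div_self two_x_ne_zero, one_pow, if_true,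
            sum_const, card_univ, Fintype.card_fin, nsmul_eq_mul, Nat.cast_succ]
          ring
        · rw [if_neg hij, Fin.sum_univ_eq_sum_range fun k ↦ ((x j / x i) ^ 2) ^ k,
            geom_sum_div_sq_of_pow_eq_one (hpow i) (hpow j) (hx.ne hij), sub_zero, mul_div_assoc]
    _ = _ := det_two_mul_div_add x add_ne

end OddRootsOfUnity

section UnitCircle

open Finset Matrix

theorem sq_sub_div_add_eq_neg_norm_sq {x y : ℂ} (h : ‖x‖ = ‖y‖) :
    ((x - y) / (x + y)) ^ 2 = -(‖(x - y) / (x + y)‖ : ℂ) ^ 2 := by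
  -- The diagonals `x - y` and `x + y` of a rhombus are perpendicular.
  have re_eq_zero : ((x - y) / (x + y)).re = 0 := by
    have normSq_eq : x.re * x.re + x.im * x.im = y.re * y.re + y.im * y.im := by
      rw [← Complex.normSq_apply, ← Complex.sq_norm, h, Complex.sq_norm, Complex.normSq_apply]
    rw [Complex.div_re, ← add_div, Complex.sub_re, Complex.add_re, Complex.sub_im, Complex.add_im]
    exact div_eq_zero_iff.mpr (.inl (by linear_combination normSq_eq))
  rw [← Complex.ofReal_pow, Complex.sq_norm, Complex.normSq_apply]
  apply Complex.ext <;> simp [sq, re_eq_zero]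

theorem sum_card_Ioi_fin (m : ℕ) : ∑ i : Fin m, #(Ioi i) = m.choose 2 := by
  simp only [Fin.card_Ioi]
  rw [Fin.sum_univ_eq_sum_range fun i ↦ m - 1 - i, sum_range_reflect (fun i ↦ i),
    sum_range_id, Nat.choose_two_right]

theorem exists_map_univ_eq {α : Type*} {T : Finset α} {m : ℕ} (hT : #T = m) :
    ∃ t : Fin m ↪ α, univ.map t = T :=
  ⟨(T.equivFinOfCardEq hT).symm.toEmbedding.trans (.subtype _), by
    rw [← Finset.map_map, map_univ_equiv, univ_eq_attach, attach_map_val]⟩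

theorem prod_Ioi_sq_sub_div_add {m : ℕ} {x : Fin m → ℂ} {r : ℝ} (hx : ∀ i, ‖x i‖ = r) :
    ∏ i, ∏ j ∈ Ioi i, ((x j - x i) / (x j + x i)) ^ 2 =
      (-1) ^ m.choose 2 * ∏ i, ∏ j ∈ {i}ᶜ, (‖(x j - x i) / (x j + x i)‖ : ℂ) := by
  rw [← prod_prod_Ioi_mul_eq_prod_prod_off_diag fun j i ↦ (‖(x j - x i) / (x j + x i)‖ : ℂ),
    ← sum_card_Ioi_fin, ← prod_pow_eq_pow_sum, ← prod_mul_distrib]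
  refine prod_congr rfl fun i _ ↦ ?_
  rw [← prod_const, ← prod_mul_distrib]
  refine prod_congr rfl fun j _ ↦ ?_
  have norm_symm : ‖(x i - x j) / (x i + x j)‖ = ‖(x j - x i) / (x j + x i)‖ := by
    rw [norm_div, norm_div, norm_sub_rev, add_comm]
  rw [norm_symm, sq_sub_div_add_eq_neg_norm_sq ((hx j).trans (hx i).symm)]
  ring

/-- For unit complex numbers `x a = exp (i θ a)`, the product of `|tan ((θ a - θ b) / 2)|` over the
ordered pairs of distinct elements `a`, `b` of `T`. -/
noncomputable def tanProd {α : Type*} [DecidableEq α] (x : α → ℂ) (T : Finset α) : ℝ :=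
  ∏ a ∈ T, ∏ b ∈ T.erase a, ‖(x b - x a) / (x b + x a)‖

variable {α : Type*} [DecidableEq α] {x : α → ℂ} {T : Finset α} {n k : ℕ}

theorem det_two_mul_sum_pow_sub_eq_tanProd (hT : #T = n + 1) (hinj : Set.InjOn x T)
    (hpow : ∀ a ∈ T, x a ^ (2 * n + 1) = 1) :
    (of fun k l : Fin (n + 1) ↦ 2 * ∑ a ∈ T, (x a ^ 2) ^ (k : ℕ) * ((x a ^ 2)⁻¹) ^ (l : ℕ) -
        (if k = l then 2 * n + 1 else 0 : ℂ)).det = (-1) ^ (n + 1).choose 2 * tanProd x T := by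
  obtain ⟨t, rfl⟩ := exists_map_univ_eq hT
  simp only [mem_map, mem_univ, true_and, forall_exists_index, forall_apply_eq_imp_iff] at hpow
  have comp_injective : Function.Injective (x ∘ t) := fun i j h ↦
    t.injective (hinj (by simp) (by simp) h)
  have norm_comp (i) : ‖(x ∘ t) i‖ = 1 := Complex.norm_eq_one_of_pow_eq_one (hpow i) (by simp)
  have tanProd_map : tanProd x (univ.map t) =
      ∏ i, ∏ j ∈ {i}ᶜ, ‖(x (t j) - x (t i)) / (x (t j) + x (t i))‖ := by
    simp only [tanProd, prod_map, ← map_erase, compl_singleton]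
  have det_eq := det_two_mul_sum_pow_mul_inv_pow_sub (x ∘ t) comp_injective hpow
  rw [prod_Ioi_sq_sub_div_add norm_comp] at det_eq
  simpa only [sum_map, tanProd_map, Complex.ofReal_prod, Function.comp_apply] using det_eq

theorem norm_sub_div_add_pos_of_mem_erase (hk : Odd k) (hinj : Set.InjOn x T)
    (hpow : ∀ a ∈ T, x a ^ k = 1) {a b : α} (ha : a ∈ T) (hb : b ∈ T.erase a) :
    0 < ‖(x b - x a) / (x b + x a)‖ := by
  obtain ⟨hba, hb⟩ := mem_erase.mp hb
  exact norm_pos_iff.mpr (div_ne_zero (sub_ne_zero.mpr (hinj.ne hb ha hba))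
    (add_ne_zero_of_odd_pow_eq_one hk (hpow b hb) (hpow a ha)))

theorem tanProd_pos (hk : Odd k) (hinj : Set.InjOn x T) (hpow : ∀ a ∈ T, x a ^ k = 1) :
    0 < tanProd x T :=
  prod_pos fun _ ha ↦ prod_pos fun _ hb ↦ norm_sub_div_add_pos_of_mem_erase hk hinj hpow ha hb

theorem log_tanProd (hk : Odd k) (hinj : Set.InjOn x T) (hpow : ∀ a ∈ T, x a ^ k = 1) :
    Real.log (tanProd x T) = ∑ a ∈ T, ∑ b ∈ T, Real.log ‖(x b - x a) / (x b + x a)‖ := by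
  have factor_ne_zero {a b} (ha : a ∈ T) (hb : b ∈ T.erase a) :
      ‖(x b - x a) / (x b + x a)‖ ≠ 0 :=
    (norm_sub_div_add_pos_of_mem_erase hk hinj hpow ha hb).ne'
  rw [tanProd, Real.log_prod fun a ha ↦ prod_ne_zero_iff.mpr fun b hb ↦ factor_ne_zero ha hb]
  refine sum_congr rfl fun a ha ↦ ?_
  rw [Real.log_prod fun b hb ↦ factor_ne_zero ha hb]
  -- The omitted diagonal terms are `Real.log 0 = 0`.
  exact sum_erase _ (by simp)

end UnitCircle

section QuadraticClasses

open Finset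

variable {F : Type*} [Field F] [Fintype F] [DecidableEq F] {ε : ℤ}

/-- Zero together with the elements of quadratic character `ε`; the cases of interest are
`ε = 1` and `ε = -1`. -/
def quadraticClass (F : Type*) [Field F] [Fintype F] [DecidableEq F] (ε : ℤ) : Finset F :=
  {a | a = 0 ∨ quadraticChar F a = ε}

theorem two_mul_sum_quadraticClass {R : Type*} [CommRing R] (hε : ε = 1 ∨ ε = -1) (f : F → R) :
    2 * ∑ a ∈ quadraticClass F ε, f a =
      ∑ a, f a + ε * ∑ a, (quadraticChar F a : R) * f a + f 0 := by
  have pointwise (a : F) : (if a = 0 ∨ quadraticChar F a = ε then 2 * f a else 0) =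
      f a + ε * ((quadraticChar F a : R) * f a) + if a = 0 then f 0 else 0 := by
    obtain rfl | ha := eq_or_ne a 0
    · simp [two_mul]
    · rcases hε with rfl | rfl <;> rcases quadraticChar_dichotomy ha with h | h <;>
        simp only [h, ha] <;> norm_num [two_mul]
  rw [quadraticClass, mul_sum, sum_filter, sum_congr rfl fun a _ ↦ pointwise a, sum_add_distrib,
    sum_add_distrib, ← mul_sum, sum_ite_eq' univ 0 fun _ ↦ f 0, if_pos (mem_univ 0)]

theorem two_mul_card_quadraticClass (hF : ringChar F ≠ 2) (hε : ε = 1 ∨ ε = -1) :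
    2 * #(quadraticClass F ε) = Fintype.card F + 1 := by
  have sum_one := two_mul_sum_quadraticClass hε fun _ : F ↦ (1 : ℤ)
  simp only [mul_one, Int.cast_id, quadraticChar_sum_zero hF, mul_zero, add_zero, sum_const,
    card_univ, nsmul_eq_mul] at sum_one
  exact_mod_cast sum_one

theorem four_mul_sum_sum_quadraticClass {R : Type*} [CommRing R] (hF : ringChar F ≠ 2)
    (hε : ε = 1 ∨ ε = -1) {f : F → R} (hf : f.Even) :
    4 * ∑ a ∈ quadraticClass F ε, ∑ b ∈ quadraticClass F ε, f (b - a) =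
      (Fintype.card F + 2) * ∑ d, f d +
        ∑ a, (quadraticChar F a : R) * ∑ b, (quadraticChar F b : R) * f (b - a) + f 0 +
        2 * ε * ∑ d, (quadraticChar F d : R) * f d := by
  have sum_char : ∑ a, (quadraticChar F a : R) = 0 := by
    exact_mod_cast congrArg (Int.cast : ℤ → R) (quadraticChar_sum_zero hF)
  have sum_shift (a : F) : ∑ b, f (b - a) = ∑ d, f d := (Equiv.subRight a).sum_comp f
  have sum_conv : ∑ a, ∑ b, (quadraticChar F b : R) * f (b - a) = 0 := by
    rw [sum_comm]
    have (b : F) : ∑ a, f (b - a) = ∑ d, f d := (Equiv.subLeft b).sum_comp f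
    simp only [← mul_sum, this, ← sum_mul, sum_char, zero_mul]
  have inner_sum (a : F) : 2 * ∑ b ∈ quadraticClass F ε, f (b - a) =
      ∑ d, f d + ε * ∑ b, (quadraticChar F b : R) * f (b - a) + f a := by
    rw [two_mul_sum_quadraticClass hε fun b ↦ f (b - a), sum_shift, zero_sub, hf]
  have sq_ε : (ε : R) * ε = 1 := by rcases hε with rfl | rfl <;> simp
  calc _ = 2 * ∑ a ∈ quadraticClass F ε, 2 * ∑ b ∈ quadraticClass F ε, f (b - a) := by
        rw [← mul_sum]; ring
    _ = _ := by
        simp only [inner_sum]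
        rw [two_mul_sum_quadraticClass hε]
        simp only [sub_zero, mul_add, sum_add_distrib, ← sum_mul, sum_char, mul_left_comm _ (ε : R),
          ← mul_sum, sum_conv, sum_const, card_univ, nsmul_eq_mul]
        linear_combination
          (∑ a, (quadraticChar F a : R) * ∑ b, (quadraticChar F b : R) * f (b - a)) * sq_ε

theorem sum_sum_quadraticClass_one_sub_neg_one (hF : ringChar F ≠ 2) {f : F → ℝ} (hf : f.Even) :
    ∑ a ∈ quadraticClass F 1, ∑ b ∈ quadraticClass F 1, f (b - a) -
        ∑ a ∈ quadraticClass F (-1), ∑ b ∈ quadraticClass F (-1), f (b - a) =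
      ∑ d, (quadraticChar F d : ℝ) * f d := by
  have sum_one := four_mul_sum_sum_quadraticClass hF (.inl rfl) hf
  have sum_neg_one := four_mul_sum_sum_quadraticClass hF (.inr rfl) hf
  push_cast at sum_one sum_neg_one
  linarith

end QuadraticClasses

section GaussSums

open Finset

theorem ringChar_ne_two_of_card_mod_four_eq_one {F : Type*} [Field F] [Fintype F]
    (hF : Fintype.card F % 4 = 1) : ringChar F ≠ 2 := by
  rw [Ne, FiniteField.even_card_iff_char_two]
  omega

variable {F : Type*} [Field F] [Fintype F] [DecidableEq F]

/-- The quadratic character of a finite field with complex values. -/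
noncomputable abbrev complexQuadraticChar (F : Type*) [Field F] [Fintype F] [DecidableEq F] :
    MulChar F ℂ :=
  (quadraticChar F).ringHomComp (Int.castRingHom ℂ)

theorem complexQuadraticChar_isQuadratic : (complexQuadraticChar F).IsQuadratic :=
  (quadraticChar_isQuadratic F).comp _

theorem complexQuadraticChar_ne_one (hF : ringChar F ≠ 2) : complexQuadraticChar F ≠ 1 :=
  (MulChar.ringHomComp_ne_one_iff (RingHom.injective_int _)).mpr (quadraticChar_ne_one hF)

theorem gaussSum_complexQuadraticChar_mulShift (hF : ringChar F ≠ 2) (ψ : AddChar F ℂ) (d : F) :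
    gaussSum (complexQuadraticChar F) (ψ.mulShift d) =
      quadraticChar F d * gaussSum (complexQuadraticChar F) ψ := by
  obtain rfl | hd := eq_or_ne d 0
  · rw [AddChar.mulShift_zero, gaussSum_one_right (complexQuadraticChar_ne_one hF)]
    simp
  · have := gaussSum_mulShift_eq (complexQuadraticChar F) ψ (Units.mk0 d hd)
    rwa [complexQuadraticChar_isQuadratic.inv] at this

theorem exists_gaussSum_complexQuadraticChar_eq_sqrt_card (hF : Fintype.card F % 4 = 1)
    {ψ : AddChar F ℂ} (hψ : ψ.IsPrimitive) :
    ∃ φ : AddChar F ℂ, φ.IsPrimitive ∧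
      gaussSum (complexQuadraticChar F) φ = √(Fintype.card F) := by
  have char_ne_two := ringChar_ne_two_of_card_mod_four_eq_one hF
  have gauss_sq : gaussSum (complexQuadraticChar F) ψ ^ 2 = (√(Fintype.card F) : ℂ) ^ 2 := by
    rw [gaussSum_sq (complexQuadraticChar_ne_one char_ne_two) complexQuadraticChar_isQuadratic hψ,
      MulChar.ringHomComp_apply, quadraticChar_neg_one char_ne_two,
      ZMod.χ₄_nat_one_mod_four hF, ← Complex.ofReal_pow, Real.sq_sqrt (Nat.cast_nonneg _)]
    simp
  obtain gauss_eq | gauss_eq := sq_eq_sq_iff_eq_or_eq_neg.mp gauss_sq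
  · exact ⟨ψ, hψ, gauss_eq⟩
  · obtain ⟨u, hu⟩ := quadraticChar_exists_neg_one' char_ne_two
    refine ⟨ψ.mulShift u, AddChar.IsPrimitive.of_ne_one (hψ u.ne_zero), ?_⟩
    rw [gaussSum_complexQuadraticChar_mulShift char_ne_two, hu, gauss_eq]
    simp

theorem two_mul_sum_quadraticClass_addChar (hF : ringChar F ≠ 2) {ε : ℤ} (hε : ε = 1 ∨ ε = -1)
    {ψ : AddChar F ℂ} (hψ : ψ.IsPrimitive) (d : F) :
    2 * ∑ a ∈ quadraticClass F ε, ψ (a * d) =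
      (if d = 0 then (Fintype.card F : ℂ) else 0) +
        ε * (quadraticChar F d * gaussSum (complexQuadraticChar F) ψ) + 1 := by
  have gauss_eq : ∑ a, (quadraticChar F a : ℂ) * ψ (a * d) =
      quadraticChar F d * gaussSum (complexQuadraticChar F) ψ := by
    rw [← gaussSum_complexQuadraticChar_mulShift hF, gaussSum]
    simp [mul_comm]
  rw [two_mul_sum_quadraticClass hε fun a ↦ ψ (a * d), AddChar.sum_mulShift d hψ, gauss_eq,
    zero_mul, AddChar.map_zero_eq_one]
  simp

end GaussSums

section AbelSummation

open Finset

theorem norm_sum_range_smul_le_of_antitone {E : Type*} [SeminormedAddCommGroup E] [NormedSpace ℝ E]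
    {w : ℕ → ℝ} (hw : Antitone w) (w_nonneg : ∀ i, 0 ≤ w i) {z : ℕ → E} {b : ℝ}
    (hz : ∀ K, ‖∑ i ∈ range K, z i‖ ≤ b) (K : ℕ) :
    ‖∑ i ∈ range K, w i • z i‖ ≤ w 0 * b := by
  have b_nonneg : 0 ≤ b := by simpa using hz 0
  obtain _ | K := K
  · simpa using mul_nonneg (w_nonneg 0) b_nonneg
  have boundary : ‖w K • ∑ i ∈ range (K + 1), z i‖ ≤ w K * b := by
    rw [norm_smul, Real.norm_of_nonneg (w_nonneg K)]
    exact mul_le_mul_of_nonneg_left (hz _) (w_nonneg K)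
  have interior :
      ‖∑ i ∈ range K, (w (i + 1) - w i) • ∑ j ∈ range (i + 1), z j‖ ≤ (w 0 - w K) * b := by
    rw [← sum_range_sub' w, sum_mul]
    refine norm_sum_le_of_le _ fun i _ ↦ ?_
    have step : w (i + 1) - w i ≤ 0 := sub_nonpos.mpr (hw i.le_succ)
    rw [norm_smul, Real.norm_of_nonpos step, neg_sub]
    exact mul_le_mul_of_nonneg_left (hz _) (by linarith)
  rw [sum_range_by_parts, Nat.add_sub_cancel]
  linarith [norm_sub_le (w K • ∑ i ∈ range (K + 1), z i)
    (∑ i ∈ range K, (w (i + 1) - w i) • ∑ j ∈ range (i + 1), z j)]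

theorem sum_range_natCast_zmod {N : ℕ} [NeZero N] {A : Type*} [AddCommMonoid A] (f : ZMod N → A) :
    ∑ i ∈ range N, f i = ∑ a, f a :=
  sum_nbij' (fun i ↦ (i : ZMod N)) ZMod.val (by simp) (by simp [ZMod.val_lt])
    (fun _ hi ↦ ZMod.val_cast_of_lt (mem_range.mp hi)) (by simp) (by simp)

theorem sum_range_natCast_add_zmod {N : ℕ} [NeZero N] {A : Type*} [AddCommMonoid A] (f : ZMod N → A)
    (M : ℕ) : ∑ i ∈ range N, f ((M + i : ℕ) : ZMod N) = ∑ a, f a := by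
  simp only [Nat.cast_add]
  rw [sum_range_natCast_zmod fun a ↦ f ((M : ZMod N) + a)]
  exact Equiv.sum_comp (Equiv.addLeft (M : ZMod N)) f

theorem norm_sum_range_natCast_add_le {N : ℕ} [NeZero N] {E : Type*} [SeminormedAddCommGroup E]
    {f : ZMod N → E} (hf : ∑ a, f a = 0) (M K : ℕ) :
    ‖∑ i ∈ range K, f ((M + i : ℕ) : ZMod N)‖ ≤ ∑ a, ‖f a‖ := by
  induction K using Nat.strong_induction_on with
  | _ K ih =>
    obtain hK | hK := lt_or_ge K N
    · calc _ ≤ ∑ i ∈ range K, ‖f ((M + i : ℕ) : ZMod N)‖ := norm_sum_le _ _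
        _ ≤ ∑ i ∈ range N, ‖f ((M + i : ℕ) : ZMod N)‖ :=
            sum_le_sum_of_subset_of_nonneg (range_mono hK.le) fun _ _ _ ↦ norm_nonneg _
        _ = _ := sum_range_natCast_add_zmod (fun a ↦ ‖f a‖) M
    · obtain ⟨k, rfl⟩ := Nat.exists_eq_add_of_le hK
      rw [sum_range_add, sum_range_natCast_add_zmod f, hf, zero_add]
      simpa using ih k (Nat.lt_add_of_pos_left (NeZero.pos N))

end AbelSummation

section LFunctionAtOne

open Filter Finset Topology

variable {N : ℕ} [NeZero N] {f : ZMod N → ℂ}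

theorem norm_LFunction_sub_sum_range_term_le (hf : ∑ a, f a = 0) {M : ℕ} (hM : M ≠ 0) {x : ℝ}
    (hx : 1 < x) :
    ‖ZMod.LFunction f x - ∑ n ∈ range M, LSeries.term (f ·) x n‖ ≤ (∑ a, ‖f a‖) / M := by
  have one_lt_re : 1 < (x : ℂ).re := by simpa using hx
  have partial_sums := (ZMod.LSeriesSummable_of_one_lt_re f one_lt_re).hasSum.tendsto_sum_nat
  rw [ZMod.LFunction_eq_LSeries f one_lt_re]
  refine le_of_tendsto (partial_sums.sub_const _).norm ?_
  filter_upwards [eventually_ge_atTop M] with L hL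
  obtain ⟨K, rfl⟩ := Nat.exists_eq_add_of_le hL
  have weight_antitone : Antitone fun i ↦ ((M + i : ℕ) : ℝ) ^ (-x) := fun i j hij ↦
    Real.rpow_le_rpow_of_nonpos (by positivity) (by simpa using hij) (by linarith)
  have weight_zero_le : ((M + 0 : ℕ) : ℝ) ^ (-x) ≤ (M : ℝ)⁻¹ := by
    rw [← Real.rpow_neg_one]
    exact Real.rpow_le_rpow_of_exponent_le (by exact_mod_cast Nat.one_le_iff_ne_zero.mpr hM)
      (by linarith)
  have term_eq (i : ℕ) : LSeries.term (f ·) x (M + i) =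
      (((M + i : ℕ) : ℝ) ^ (-x)) • f ((M + i : ℕ) : ZMod N) := by
    rw [LSeries.term_of_ne_zero (by omega), Complex.real_smul, Complex.ofReal_cpow (by positivity),
      div_eq_inv_mul, ← Complex.cpow_neg, Complex.ofReal_neg, Complex.ofReal_natCast]
  calc ‖∑ n ∈ range (M + K), LSeries.term (f ·) x n - ∑ n ∈ range M, LSeries.term (f ·) x n‖
      = ‖∑ i ∈ range K, (((M + i : ℕ) : ℝ) ^ (-x)) • f ((M + i : ℕ) : ZMod N)‖ := by
        rw [sum_range_add, add_sub_cancel_left, sum_congr rfl fun i _ ↦ term_eq i]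
    _ ≤ ((M + 0 : ℕ) : ℝ) ^ (-x) * ∑ a, ‖f a‖ :=
        norm_sum_range_smul_le_of_antitone weight_antitone (fun _ ↦ by positivity)
          (norm_sum_range_natCast_add_le hf M) K
    _ ≤ (∑ a, ‖f a‖) / M := by
        rw [div_eq_inv_mul]
        exact mul_le_mul_of_nonneg_right weight_zero_le (sum_nonneg fun _ _ ↦ norm_nonneg _)

theorem norm_LFunction_one_sub_sum_range_div_le (hf : ∑ a, f a = 0) {M : ℕ} (hM : M ≠ 0) :
    ‖ZMod.LFunction f 1 - ∑ n ∈ range M, f n / n‖ ≤ (∑ a, ‖f a‖) / M := by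
  have term_continuous (n : ℕ) : Continuous fun x : ℝ ↦ LSeries.term (f ·) x n :=
    (LSeries.hasDerivAt_term (f ·) n · |>.continuousAt) |> continuous_iff_continuousAt.mpr
      |>.comp Complex.continuous_ofReal
  have error_continuous : Continuous fun x : ℝ ↦
      ZMod.LFunction f x - ∑ n ∈ range M, LSeries.term (f ·) x n :=
    ((ZMod.differentiable_LFunction_of_sum_zero hf).continuous.comp Complex.continuous_ofReal).sub
      (continuous_finsetSum _ fun n _ ↦ term_continuous n)
  have error_one : ZMod.LFunction f ((1 : ℝ) : ℂ) -
      ∑ n ∈ range M, LSeries.term (f ·) ((1 : ℝ) : ℂ) n =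
      ZMod.LFunction f 1 - ∑ n ∈ range M, f n / n := by
    rw [Complex.ofReal_one]
    congr 1
    refine sum_congr rfl fun n _ ↦ ?_
    obtain rfl | hn := eq_or_ne n 0
    · simp
    · rw [LSeries.term_of_ne_zero hn, Complex.cpow_one]
  rw [← error_one]
  refine le_of_tendsto ((error_continuous.norm.tendsto 1).mono_left
    (nhdsWithin_le_nhds (s := Set.Ioi 1))) ?_
  filter_upwards [self_mem_nhdsWithin] with x hx
  exact norm_LFunction_sub_sum_range_term_le hf hM hx

theorem tendsto_sum_range_div_LFunction_one (hf : ∑ a, f a = 0) :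
    Tendsto (fun M ↦ ∑ n ∈ range M, f n / n) atTop (𝓝 (ZMod.LFunction f 1)) := by
  rw [tendsto_iff_norm_sub_tendsto_zero]
  refine squeeze_zero' (.of_forall fun _ ↦ norm_nonneg _) ?_
    (tendsto_const_div_atTop_nhds_zero_nat (∑ a, ‖f a‖))
  filter_upwards [eventually_ne_atTop 0] with M hM
  rw [norm_sub_rev]
  exact norm_LFunction_one_sub_sum_range_div_le hf hM

theorem one_sub_mem_slitPlane_of_norm_eq_one {z : ℂ} (hz : ‖z‖ = 1) (z_ne_one : z ≠ 1) :
    1 - z ∈ Complex.slitPlane := by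
  have re_lt_one : z.re < 1 := by
    refine lt_of_le_of_ne (hz ▸ z.re_le_norm) fun re_eq ↦ z_ne_one (Complex.ext re_eq ?_)
    exact Complex.abs_re_eq_norm.mp (by rw [hz, re_eq, abs_one])
  exact Complex.mem_slitPlane_iff.mpr (.inl (by simpa using re_lt_one))

theorem LFunction_one_eq_neg_sum_mul_log {ι : Type*} [Fintype ι] (hf : ∑ a, f a = 0) {c z : ι → ℂ}
    (hz : ∀ i, ‖z i‖ = 1) (hcz : ∀ i, z i = 1 → c i = 0) (hfc : ∀ n : ℕ, f n = ∑ i, c i * z i ^ n) :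
    ZMod.LFunction f 1 = -∑ i, c i * Complex.log (1 - z i) := by
  have tsum_eq {r : ℝ} (hr : r ∈ Set.Ioo 0 1) :
      ∑' n : ℕ, f n / n * (r : ℂ) ^ n = -∑ i, c i * Complex.log (1 - r * z i) := by
    have log_series (i : ι) : HasSum (fun n : ℕ ↦ c i * ((r * z i) ^ n / n))
        (c i * -Complex.log (1 - r * z i)) :=
      (Complex.hasSum_taylorSeries_neg_log
        (by simpa [hz i, abs_of_pos hr.1] using hr.2)).mul_left _
    simp only [← sum_neg_distrib, ← mul_neg]
    rw [← (hasSum_sum fun i (_ : i ∈ univ) ↦ log_series i).tsum_eq]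
    refine tsum_congr fun n ↦ ?_
    rw [hfc, sum_div, sum_mul]
    exact sum_congr rfl fun i _ ↦ by ring
  have tendsto_log : Tendsto (fun r : ℝ ↦ -∑ i, c i * Complex.log (1 - r * z i)) (𝓝[<] 1)
      (𝓝 (-∑ i, c i * Complex.log (1 - z i))) := by
    refine (tendsto_finsetSum _ fun i _ ↦ ?_).neg
    obtain hi | hi := eq_or_ne (z i) 1
    · simp [hcz i hi]
    · have arg_continuous : Continuous fun r : ℝ ↦ 1 - (r : ℂ) * z i := by fun_prop
      have arg_tendsto := (arg_continuous.tendsto 1).mono_left (nhdsWithin_le_nhds (s := Set.Iio 1))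
      rw [Complex.ofReal_one, one_mul] at arg_tendsto
      exact (arg_tendsto.clog (one_sub_mem_slitPlane_of_norm_eq_one (hz i) hi)).const_mul _
  have tendsto_tsum : Tendsto (fun r : ℝ ↦ ∑' n : ℕ, f n / n * (r : ℂ) ^ n) (𝓝[<] 1)
      (𝓝 (ZMod.LFunction f 1)) :=
    (Complex.tendsto_tsum_powerSeries_nhdsWithin_lt
      (tendsto_sum_range_div_LFunction_one hf)).comp tendsto_map
  refine tendsto_nhds_unique (tendsto_tsum.congr' ?_) tendsto_log
  filter_upwards [Ioo_mem_nhdsLT zero_lt_one] with r hr using tsum_eq hr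

end LFunctionAtOne

section QuadraticLFunction

open Filter Topology
open scoped ComplexOrder

variable {N : ℕ} [NeZero N] {χ : DirichletCharacter ℂ N}

theorem LSeries_zetaMul_eq_riemannZeta_mul_LFunction {s : ℂ} (hs : 1 < s.re) :
    LSeries χ.zetaMul s = riemannZeta s * χ.LFunction s := by
  rw [DirichletCharacter.zetaMul, ← ArithmeticFunction.coe_mul, LSeries_convolution']
  · rw [χ.LFunction_eq_LSeries hs, ← ArithmeticFunction.LSeries_zeta_eq_riemannZeta hs]
    congr 1
    exact (LSeries_congr χ.apply_eq_toArithmeticFunction_apply _).symm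
  · exact ArithmeticFunction.LSeriesSummable_zeta_iff.mpr hs
  · exact (LSeriesSummable_congr _ fun h ↦ (χ.apply_eq_toArithmeticFunction_apply h).symm).mpr <|
      ZMod.LSeriesSummable_of_one_lt_re χ hs

theorem LFunction_nonneg_of_sq_eq_one (hχ : χ ^ 2 = 1) {x : ℝ} (hx : 1 < x) :
    0 ≤ χ.LFunction x := by
  have LSeries_nonneg : 0 ≤ LSeries χ.zetaMul x :=
    tsum_nonneg fun n ↦ LSeries.term_nonneg (DirichletCharacter.zetaMul_nonneg hχ n) x
  rw [LSeries_zetaMul_eq_riemannZeta_mul_LFunction (by simpa using hx)] at LSeries_nonneg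
  have zeta_pos := riemannZeta_pos_of_one_lt hx
  rw [← inv_mul_cancel_left₀ zeta_pos.ne' (χ.LFunction x)]
  exact mul_nonneg (inv_nonneg.mpr zeta_pos.le) LSeries_nonneg

theorem LFunction_one_pos_of_sq_eq_one (hχ : χ ^ 2 = 1) (χ_ne_one : χ ≠ 1) :
    0 < χ.LFunction 1 := by
  refine lt_of_le_of_ne ?_ (DirichletCharacter.LFunction_apply_one_ne_zero χ_ne_one).symm
  have continuous_LFunction : Continuous fun x : ℝ ↦ χ.LFunction x :=
    (DirichletCharacter.differentiable_LFunction χ_ne_one).continuous.comp Complex.continuous_ofReal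
  have tendsto_one := (continuous_LFunction.tendsto 1).mono_left
    (nhdsWithin_le_nhds (s := Set.Ioi 1))
  rw [Complex.ofReal_one] at tendsto_one
  refine ge_of_tendsto tendsto_one ?_
  filter_upwards [self_mem_nhdsWithin] with x hx using LFunction_nonneg_of_sq_eq_one hχ hx

end QuadraticLFunction

section LogarithmicSums

open Finset

section AddCharacters

variable {A : Type*} [AddCommGroup A]

/-- The value `log |tan (θ / 2)|`, where `θ` is the argument of `φ d`. It is `0` when `φ d = 1`,
by the convention `Real.log 0 = 0`. -/
noncomputable def logAbsTan (φ : AddChar A ℂ) (d : A) : ℝ :=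
  Real.log ‖(φ d - 1) / (φ d + 1)‖

theorem logAbsTan_even (φ : AddChar A ℂ) : (logAbsTan φ).Even := by
  intro d
  have φ_ne_zero : φ d ≠ 0 := (φ.val_isUnit d).ne_zero
  have sub_div_add_neg : (φ (-d) - 1) / (φ (-d) + 1) = -((φ d - 1) / (φ d + 1)) := by
    rw [AddChar.map_neg_eq_inv, ← mul_div_mul_left _ _ φ_ne_zero, mul_sub, mul_add,
      mul_inv_cancel₀ φ_ne_zero]
    ring
  rw [logAbsTan, logAbsTan, sub_div_add_neg, norm_neg]

theorem log_norm_sub_div_add_eq_logAbsTan (φ : AddChar A ℂ) (a b : A) :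
    Real.log ‖(φ b - φ a) / (φ b + φ a)‖ = logAbsTan φ (b - a) := by
  have φ_ne_zero : φ a ≠ 0 := (φ.val_isUnit a).ne_zero
  have φ_eq : φ b = φ (b - a) * φ a := by rw [← AddChar.map_add_eq_mul, sub_add_cancel]
  rw [logAbsTan, φ_eq, ← sub_one_mul, ← add_one_mul, mul_div_mul_right _ _ φ_ne_zero]

variable [Fintype A]

theorem addChar_pow_card_eq_one (φ : AddChar A ℂ) (a : A) : φ a ^ Fintype.card A = 1 := by
  rw [← AddChar.map_nsmul_eq_pow, card_nsmul_eq_zero, AddChar.map_zero_eq_one]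

theorem logAbsTan_eq_two_mul_log_sub_log (hA : Odd (Fintype.card A)) (φ : AddChar A ℂ) (d : A) :
    logAbsTan φ d = 2 * Real.log ‖1 - φ d‖ - Real.log ‖1 - φ (d + d)‖ := by
  have add_ne_zero : φ d + 1 ≠ 0 :=
    add_ne_zero_of_odd_pow_eq_one hA (addChar_pow_card_eq_one φ d) (one_pow _)
  have one_sub_double : 1 - φ (d + d) = (1 - φ d) * (φ d + 1) := by
    rw [AddChar.map_add_eq_mul]
    ring
  rw [logAbsTan, one_sub_double, norm_div, norm_mul, norm_sub_rev]
  obtain hd | hd := eq_or_ne ‖1 - φ d‖ 0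
  · simp [hd]
  · rw [Real.log_div hd (norm_ne_zero_iff.mpr add_ne_zero),
      Real.log_mul hd (norm_ne_zero_iff.mpr add_ne_zero)]
    ring

end AddCharacters

section FiniteField

variable {F : Type*} [Field F] [Fintype F] [DecidableEq F]

theorem sum_quadraticChar_mul_comp_two_mul (hF : ringChar F ≠ 2) (f : F → ℝ) :
    ∑ d, (quadraticChar F d : ℝ) * f (2 * d) =
      quadraticChar F 2 * ∑ d, (quadraticChar F d : ℝ) * f d := by
  have two_ne_zero := Ring.two_ne_zero hF
  have sq_two : (quadraticChar F 2 : ℝ) * quadraticChar F 2 = 1 := by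
    exact_mod_cast (sq _).symm.trans (quadraticChar_sq_one two_ne_zero)
  rw [← Equiv.sum_comp (Equiv.mulLeft₀ 2 two_ne_zero) fun d ↦ (quadraticChar F d : ℝ) * f d,
    mul_sum]
  refine sum_congr rfl fun d _ ↦ ?_
  rw [Equiv.mulLeft₀_apply, map_mul, Int.cast_mul]
  linear_combination -(quadraticChar F d : ℝ) * f (2 * d) * sq_two

theorem sum_quadraticChar_mul_logAbsTan (hF : ringChar F ≠ 2) (φ : AddChar F ℂ) :
    ∑ d, (quadraticChar F d : ℝ) * logAbsTan φ d =
      (2 - quadraticChar F 2) * ∑ d, (quadraticChar F d : ℝ) * Real.log ‖1 - φ d‖ := by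
  have card_odd := FiniteField.odd_card_of_char_ne_two hF
  simp only [logAbsTan_eq_two_mul_log_sub_log (Nat.odd_iff.mpr card_odd), ← two_mul, mul_sub,
    sum_sub_distrib]
  rw [sum_quadraticChar_mul_comp_two_mul hF fun d ↦ Real.log ‖1 - φ d‖]
  simp only [mul_left_comm _ (2 : ℝ), ← mul_sum]
  ring

end FiniteField

theorem injective_of_isPrimitive_zmod {N : ℕ} [NeZero N] {φ : AddChar (ZMod N) ℂ}
    (hφ : φ.IsPrimitive) : Function.Injective φ := by
  intro a b hab
  rw [← sub_eq_zero, ← hφ.zmod_char_eq_one_iff N, AddChar.map_sub_eq_div, hab,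
    div_self (φ.val_isUnit b).ne_zero]

variable {p : ℕ} [Fact p.Prime] {φ : AddChar (ZMod p) ℂ}

theorem gaussSum_mul_LFunction_one (hp : p ≠ 2) (hφ : φ.IsPrimitive) :
    gaussSum (complexQuadraticChar (ZMod p)) φ *
        DirichletCharacter.LFunction (complexQuadraticChar (ZMod p)) 1 =
      -∑ a, (quadraticChar (ZMod p) a : ℂ) * Complex.log (1 - φ a) := by
  have hchar : ringChar (ZMod p) ≠ 2 := by rwa [ZMod.ringChar_zmod_n]
  have χ_ne_one := complexQuadraticChar_ne_one hchar
  have gauss_ne_zero : gaussSum (complexQuadraticChar (ZMod p)) φ ≠ 0 :=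
    gaussSum_ne_zero_of_nontrivial (by simp [ZMod.card, NeZero.ne p]) χ_ne_one hφ
  have fourier (n : ℕ) : complexQuadraticChar (ZMod p) n =
      ∑ a, (gaussSum (complexQuadraticChar (ZMod p)) φ)⁻¹ * quadraticChar (ZMod p) a * φ a ^ n := by
    have shifted := gaussSum_complexQuadraticChar_mulShift hchar φ n
    rw [gaussSum] at shifted
    simp only [mul_assoc, ← mul_sum]
    rw [eq_inv_mul_iff_mul_eq₀ gauss_ne_zero, mul_comm]
    refine Eq.trans shifted.symm (sum_congr rfl fun a _ ↦ ?_)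
    rw [AddChar.mulShift_apply, ← nsmul_eq_mul, AddChar.map_nsmul_eq_pow]
    rfl
  have coeff_eq_zero (a : ZMod p) (ha : φ a = 1) :
      (gaussSum (complexQuadraticChar (ZMod p)) φ)⁻¹ * (quadraticChar (ZMod p) a : ℂ) = 0 := by
    simp [(hφ.zmod_char_eq_one_iff p a).mp ha]
  rw [DirichletCharacter.LFunction,
    LFunction_one_eq_neg_sum_mul_log (MulChar.sum_eq_zero_of_ne_one χ_ne_one) φ.norm_apply
      coeff_eq_zero fourier]
  simp only [mul_assoc, ← mul_sum]
  rw [mul_neg, mul_inv_cancel_left₀ gauss_ne_zero]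

open scoped ComplexOrder in
theorem sum_quadraticChar_mul_log_norm_one_sub_neg (hp : p ≠ 2) (hφ : φ.IsPrimitive)
    (gauss_pos : 0 < gaussSum (complexQuadraticChar (ZMod p)) φ) :
    ∑ a, (quadraticChar (ZMod p) a : ℝ) * Real.log ‖1 - φ a‖ < 0 := by
  have hchar : ringChar (ZMod p) ≠ 2 := by rwa [ZMod.ringChar_zmod_n]
  have LFunction_pos : 0 < DirichletCharacter.LFunction (complexQuadraticChar (ZMod p)) 1 :=
    LFunction_one_pos_of_sq_eq_one complexQuadraticChar_isQuadratic.sq_eq_one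
      (complexQuadraticChar_ne_one hchar)
  have re_pos := (Complex.pos_iff.mp (mul_pos gauss_pos LFunction_pos)).1
  rw [gaussSum_mul_LFunction_one hp hφ, Complex.neg_re, Complex.re_sum] at re_pos
  simpa [Complex.log_re] using re_pos

open scoped ComplexOrder in
theorem tanProd_quadraticClass_one_lt (hp : p ≠ 2) (hφ : φ.IsPrimitive)
    (gauss_pos : 0 < gaussSum (complexQuadraticChar (ZMod p)) φ) :
    tanProd φ (quadraticClass (ZMod p) 1) < tanProd φ (quadraticClass (ZMod p) (-1)) := by
  have hchar : ringChar (ZMod p) ≠ 2 := by rwa [ZMod.ringChar_zmod_n]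
  have card_odd : Odd (Fintype.card (ZMod p)) :=
    Nat.odd_iff.mpr (FiniteField.odd_card_of_char_ne_two hchar)
  have φ_injective : Function.Injective φ := injective_of_isPrimitive_zmod hφ
  have log_sum (ε : ℤ) : Real.log (tanProd φ (quadraticClass (ZMod p) ε)) =
      ∑ a ∈ quadraticClass (ZMod p) ε, ∑ b ∈ quadraticClass (ZMod p) ε, logAbsTan φ (b - a) := by
    rw [log_tanProd card_odd φ_injective.injOn fun a _ ↦ addChar_pow_card_eq_one φ a]
    simp only [log_norm_sub_div_add_eq_logAbsTan]
  have tanProd_pos (ε : ℤ) : 0 < tanProd φ (quadraticClass (ZMod p) ε) :=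
    tanProd_pos card_odd φ_injective.injOn fun a _ ↦ addChar_pow_card_eq_one φ a
  have two_sub_pos : (0 : ℝ) < 2 - quadraticChar (ZMod p) 2 := by
    rcases quadraticChar_dichotomy (Ring.two_ne_zero hchar) with h | h <;> rw [h] <;> norm_num
  rw [← Real.log_lt_log_iff (tanProd_pos 1) (tanProd_pos (-1)), ← sub_neg, log_sum, log_sum,
    sum_sum_quadraticClass_one_sub_neg_one hchar (logAbsTan_even φ),
    sum_quadraticChar_mul_logAbsTan hchar]
  exact mul_neg_of_pos_of_neg two_sub_pos
    (sum_quadraticChar_mul_log_norm_one_sub_neg hp hφ gauss_pos)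

end LogarithmicSums

section Chapman

open Finset Matrix

variable {p n : ℕ} [Fact p.Prime]

/-- Chapman's matrix `C` of Legendre symbols `((j - i) / p)` with `0 ≤ i, j ≤ n`. The size `n` is
arbitrary here; Chapman's determinant is the case `n = (p - 1) / 2`. -/
def chapmanMatrix (p n : ℕ) [Fact p.Prime] : Matrix (Fin (n + 1)) (Fin (n + 1)) ℤ :=
  of fun i j ↦ legendreSym p ((j : ℤ) - (i : ℤ))

theorem chapmanMatrix_apply (i j : Fin (n + 1)) :
    chapmanMatrix p n i j = quadraticChar (ZMod p) ((j : ℕ) - (i : ℕ) : ZMod p) := by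
  simp [chapmanMatrix, legendreSym]

theorem natCast_fin_sub_eq_zero_iff {N m : ℕ} (h : m ≤ N) (i j : Fin m) :
    ((i : ℕ) - (j : ℕ) : ZMod N) = 0 ↔ i = j := by
  rw [sub_eq_zero, ZMod.natCast_eq_natCast_iff', Nat.mod_eq_of_lt (i.2.trans_le h),
    Nat.mod_eq_of_lt (j.2.trans_le h), Fin.val_inj]

theorem two_dvd_det_chapmanMatrix (n_lt : n < p) (n_even : Even n) :
    2 ∣ (chapmanMatrix p n).det := by
  have parity (i j : Fin (n + 1)) :
      (chapmanMatrix p n i j : ZMod 2) = 1 - if j = i then 1 else 0 := by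
    rw [chapmanMatrix_apply]
    obtain hij | hij := eq_or_ne j i
    · simp [hij]
    · rw [if_neg hij]
      have sub_ne_zero := mt (natCast_fin_sub_eq_zero_iff n_lt j i).mp hij
      rcases quadraticChar_dichotomy sub_ne_zero with h | h <;> rw [h] <;> decide
  refine dvd_det_of_forall_dvd_row_sum fun i ↦ (ZMod.intCast_zmod_eq_zero_iff_dvd _ 2).mp ?_
  simp [parity, (ZMod.natCast_eq_zero_iff_even).mpr n_even]

theorem neg_one_pow_choose_two_eq_quadraticChar_two (hp : p = 2 * n + 1) (n_even : Even n) :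
    (-1) ^ (n + 1).choose 2 = quadraticChar (ZMod p) 2 := by
  obtain ⟨k, rfl⟩ := n_even
  have hchar : ringChar (ZMod p) ≠ 2 := by
    rw [ZMod.ringChar_zmod_n]
    omega
  have choose_eq : (k + k + 1).choose 2 = (k + k + 1) * k := by
    rw [Nat.choose_two_right, Nat.add_sub_cancel, ← mul_two, ← mul_assoc,
      Nat.mul_div_cancel _ two_pos]
  rw [quadraticChar_two hchar, ZMod.card, ZMod.χ₈_nat_eq_if_mod_eight, if_neg (by omega),
    choose_eq, pow_mul, Odd.neg_one_pow ⟨k, by ring⟩, neg_one_pow_eq_pow_mod_two]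
  rcases k.mod_two_eq_zero_or_one with h | h <;> rw [h]
  · rw [if_pos (by omega), pow_zero]
  · rw [if_neg (by omega), pow_one]

theorem det_one_add_chapmanMatrix_eq_tanProd (hp : p = 2 * n + 1) {φ : AddChar (ZMod p) ℂ}
    (hφ : φ.IsPrimitive) {ε : ℤ} (hε : ε = 1 ∨ ε = -1) :
    (of fun k l : Fin (n + 1) ↦ (1 : ℂ) + ε * (quadraticChar (ZMod p) 2 *
      gaussSum (complexQuadraticChar (ZMod p)) φ * chapmanMatrix p n l k)).det =
      (-1) ^ (n + 1).choose 2 * tanProd φ (quadraticClass (ZMod p) ε) := by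
  have hchar : ringChar (ZMod p) ≠ 2 := by
    rw [ZMod.ringChar_zmod_n]
    omega
  have card_eq : #(quadraticClass (ZMod p) ε) = n + 1 := by
    have := two_mul_card_quadraticClass hchar hε
    rw [ZMod.card] at this
    omega
  have pow_eq_one (a : ZMod p) : φ a ^ (2 * n + 1) = 1 := by
    simpa [ZMod.card, hp] using addChar_pow_card_eq_one φ a
  rw [← det_two_mul_sum_pow_sub_eq_tanProd card_eq (injective_of_isPrimitive_zmod hφ).injOn
    fun a _ ↦ pow_eq_one a]
  congr 1
  ext k l
  have term_eq (a : ZMod p) : (φ a ^ 2) ^ (k : ℕ) * ((φ a ^ 2)⁻¹) ^ (l : ℕ) =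
      φ (a * (2 * ((k : ℕ) - (l : ℕ)))) := by
    rw [← AddChar.map_nsmul_eq_pow, ← AddChar.map_neg_eq_inv, ← AddChar.map_nsmul_eq_pow,
      ← AddChar.map_nsmul_eq_pow, ← AddChar.map_add_eq_mul]
    congr 1
    simp only [nsmul_eq_mul]
    push_cast
    ring
  have diag_iff : (2 * ((k : ℕ) - (l : ℕ)) : ZMod p) = 0 ↔ k = l := by
    rw [mul_eq_zero, or_iff_right (Ring.two_ne_zero hchar),
      natCast_fin_sub_eq_zero_iff (by omega)]
  simp only [of_apply, term_eq]
  rw [two_mul_sum_quadraticClass_addChar hchar hε hφ, chapmanMatrix_apply, map_mul, ZMod.card]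
  simp only [diag_iff, hp]
  push_cast
  split_ifs <;> ring

theorem two_mul_gaussSum_pow_mul_det_chapmanMatrix (hp : p = 2 * n + 1) (n_even : Even n)
    {φ : AddChar (ZMod p) ℂ} (hφ : φ.IsPrimitive) :
    2 * gaussSum (complexQuadraticChar (ZMod p)) φ ^ (n + 1) * (chapmanMatrix p n).det =
      tanProd φ (quadraticClass (ZMod p) 1) - tanProd φ (quadraticClass (ZMod p) (-1)) := by
  set g := gaussSum (complexQuadraticChar (ZMod p)) φ
  set s : ℂ := (quadraticChar (ZMod p) 2 : ℂ)
  have hchar : ringChar (ZMod p) ≠ 2 := by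
    rw [ZMod.ringChar_zmod_n]
    omega
  have sq_s : s ^ 2 = 1 := by
    simp only [s, ← Int.cast_pow, quadraticChar_sq_one (Ring.two_ne_zero hchar), Int.cast_one]
  have sign_eq : (-1 : ℂ) ^ (n + 1).choose 2 = s := by
    simp [s, ← neg_one_pow_choose_two_eq_quadraticChar_two hp n_even]
  let M : Matrix (Fin (n + 1)) (Fin (n + 1)) ℂ :=
    (s * g) • ((Int.castRingHom ℂ).mapMatrix (chapmanMatrix p n))ᵀ
  have det_M : M.det = s * g ^ (n + 1) * (chapmanMatrix p n).det := by
    have s_pow : s ^ (n + 1) = s := by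
      obtain ⟨k, rfl⟩ := n_even
      rw [pow_succ, ← two_mul, pow_mul, sq_s, one_pow, one_mul]
    rw [det_smul, Fintype.card_fin, det_transpose, ← RingHom.map_det, mul_pow, s_pow, eq_intCast]
  have det_add : (M + vecMulVec 1 1).det = s * tanProd φ (quadraticClass (ZMod p) 1) := by
    rw [← sign_eq, ← det_one_add_chapmanMatrix_eq_tanProd hp hφ (.inl rfl)]
    congr 1
    ext k l
    simp [M, s, g, vecMulVec, add_comm]
  have det_sub : (M - vecMulVec 1 1).det = -(s * tanProd φ (quadraticClass (ZMod p) (-1))) := by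
    rw [← sign_eq, ← det_one_add_chapmanMatrix_eq_tanProd hp hφ (.inr rfl), ← neg_one_mul,
      ← n_even.add_one.neg_one_pow, ← neg_sub, det_neg, Fintype.card_fin]
    congr 2
    ext k l
    simp [M, s, g, vecMulVec, sub_eq_add_neg]
  have rank_one := det_add_vecMulVec_add_det_sub_vecMulVec M 1 1
  rw [det_add, det_sub, det_M] at rank_one
  have cancelled := congrArg (s * ·) rank_one
  linear_combination -cancelled + (tanProd φ (quadraticClass (ZMod p) 1) -
    tanProd φ (quadraticClass (ZMod p) (-1)) -
      2 * g ^ (n + 1) * (chapmanMatrix p n).det) * sq_s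

open scoped ComplexOrder in
theorem det_chapmanMatrix_neg (hp : p = 2 * n + 1) (n_even : Even n) :
    (chapmanMatrix p n).det < 0 := by
  have card_mod_four : Fintype.card (ZMod p) % 4 = 1 := by
    obtain ⟨k, rfl⟩ := n_even
    rw [ZMod.card]
    omega
  obtain ⟨φ, hφ, gauss_eq⟩ := exists_gaussSum_complexQuadraticChar_eq_sqrt_card card_mod_four
    (ZMod.isPrimitive_stdAddChar p)
  rw [ZMod.card] at gauss_eq
  have sqrt_pos : 0 < √(p : ℝ) := Real.sqrt_pos.mpr (Nat.cast_pos.mpr (NeZero.pos p))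
  have gauss_pos : 0 < gaussSum (complexQuadraticChar (ZMod p)) φ := by
    rw [gauss_eq]
    exact_mod_cast sqrt_pos
  have tanProd_lt := tanProd_quadraticClass_one_lt (by omega) hφ gauss_pos
  have det_eq : 2 * √(p : ℝ) ^ (n + 1) * ((chapmanMatrix p n).det : ℝ) =
      tanProd φ (quadraticClass (ZMod p) 1) - tanProd φ (quadraticClass (ZMod p) (-1)) := by
    have det_eq_complex := two_mul_gaussSum_pow_mul_det_chapmanMatrix hp n_even hφ
    rw [gauss_eq] at det_eq_complex
    apply Complex.ofReal_injective
    simpa only [Complex.ofReal_mul, Complex.ofReal_pow, Complex.ofReal_sub, Complex.ofReal_ofNat,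
      Complex.ofReal_intCast] using det_eq_complex
  have det_real_neg : ((chapmanMatrix p n).det : ℝ) < 0 := by
    refine neg_of_mul_neg_right ?_ (a := 2 * √(p : ℝ) ^ (n + 1)) (by positivity)
    rw [det_eq]
    exact sub_neg.mpr tanProd_lt
  exact_mod_cast det_real_neg

end Chapman

/-- Chapman's determinant is negative and even for p ≡ 1 (mod 4). -/
theorem chapman_det_neg_even (p : ℕ) [Fact p.Prime] (hp : p % 4 = 1) :
    (Matrix.of fun i j : Fin ((p - 1) / 2 + 1) =>
        legendreSym p ((j : ℤ) - (i : ℤ))).det < 0 ∧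
    2 ∣ (Matrix.of fun i j : Fin ((p - 1) / 2 + 1) =>
        legendreSym p ((j : ℤ) - (i : ℤ))).det := by
  have n_even : Even ((p - 1) / 2) := Nat.even_iff.mpr (by omega)
  exact ⟨det_chapmanMatrix_neg (by omega) n_even, two_dvd_det_chapmanMatrix (by omega) n_even⟩
end
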